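/- arXiv:1204.2306 — 2 statements merged into one kernel-verified Lean document; each statement's English description precedes it below -/
import Mathlib

section
/- Let T be a 2-sparse tree with ℓ ≥ 2 leaves, and let G be any graph obtained from T by expanding each edge of T into a complete graph of arbitrary order (i.e., replacing each edge uv of T by a complete graph containing u and v). Then P(G) = ℓ − 1. -/
namespace PaperPC

open SimpleGraph

variable {V : Type*}

/-- The degree of a vertex, via the cardinality of its neighbor set. -/
noncomputable def ndeg (G : SimpleGraph V) (v : V) : ℕ := (G.neighborSet v).ncard

/-- A linear forest: an acyclic graph of maximum degree at most 2,
i.e. a vertex-disjoint union of paths.  A spanning linear subforest of `G`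
is exactly a path covering of `G` (isolated vertices are one-vertex paths). -/
def IsLinearForest (H : SimpleGraph V) : Prop :=
  H.IsAcyclic ∧ ∀ v, ndeg H v ≤ 2

/-- The number of paths of a path covering = number of connected components. -/
noncomputable def numPaths (H : SimpleGraph V) : ℕ := Nat.card H.ConnectedComponent

/-- The path covering number `P(G)`. -/
noncomputable def pathCoverNumber (G : SimpleGraph V) : ℕ :=
  sInf {k | ∃ H ≤ G, IsLinearForest H ∧ numPaths H = k}

/-- `H` is a minimum path covering of `G`. -/
def IsMinPathCover (G H : SimpleGraph V) : Prop :=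
  H ≤ G ∧ IsLinearForest H ∧ numPaths H = pathCoverNumber G

open scoped Classical in
/-- The path sequence of a path covering: the multiset of the numbers of vertices
of its paths (a multiset encodes the nondecreasing ordered sequence). -/
noncomputable def pathSeq [Fintype V] (H : SimpleGraph V) : Multiset ℕ :=
  (Finset.univ : Finset H.ConnectedComponent).val.map fun c => c.supp.ncard

/-- `G` admits a unique path sequence. -/
def UniquePathSequence [Fintype V] (G : SimpleGraph V) : Prop :=
  ∀ H₁ H₂ : SimpleGraph V, IsMinPathCover G H₁ → IsMinPathCover G H₂ →
    pathSeq H₁ = pathSeq H₂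

/-- Number of leaves (vertices of degree 1). -/
noncomputable def numLeaves (G : SimpleGraph V) : ℕ := {v | ndeg G v = 1}.ncard

/-- Number of heavy edges (edges both of whose endpoints have degree > 2). -/
noncomputable def numHeavyEdges (G : SimpleGraph V) : ℕ :=
  {e ∈ G.edgeSet | ∀ v ∈ e, 2 < ndeg G v}.ncard

/-- Number of edges. -/
noncomputable def numEdges (G : SimpleGraph V) : ℕ := G.edgeSet.ncard

/-- A graph is 2-sparse if no two adjacent vertices both have degree > 2. -/
def TwoSparse (G : SimpleGraph V) : Prop :=
  ∀ u v, G.Adj u v → ndeg G u ≤ 2 ∨ ndeg G v ≤ 2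

/-- `G` is a path graph. -/
def IsPathGraph (G : SimpleGraph V) : Prop := G.IsTree ∧ ∀ v, ndeg G v ≤ 2

/-- `G` is a cycle graph. -/
def IsCycleGraph (G : SimpleGraph V) : Prop := G.Connected ∧ ∀ v, ndeg G v = 2

/-- A generalized star: a tree with exactly one heavy vertex (the center) in which
all vines have the same number of vertices (equivalently, all leaves are at the same
distance from the center). -/
def IsGenStar (G : SimpleGraph V) : Prop :=
  G.IsTree ∧ ∃ c k, 2 < ndeg G c ∧ (∀ v, v ≠ c → ndeg G v ≤ 2) ∧
    ∀ v, ndeg G v = 1 → G.dist c v = k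

/-- An L(2,1)-labeling. -/
def IsL21Labeling (G : SimpleGraph V) (f : V → ℕ) : Prop :=
  (∀ u v, G.Adj u v → 2 ≤ Nat.dist (f u) (f v)) ∧
  (∀ u v, G.dist u v = 2 → 1 ≤ Nat.dist (f u) (f v))

/-- `λ(G)`: the least `k` such that `G` has an L(2,1)-labeling with labels in `{0,…,k}`. -/
noncomputable def lambdaNum (G : SimpleGraph V) : ℕ :=
  sInf {k | ∃ f : V → ℕ, IsL21Labeling G f ∧ ∀ v, f v ≤ k}

/-- A λ-labeling: an L(2,1)-labeling with maximum label `λ(G)`. -/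
def IsLambdaLabeling (G : SimpleGraph V) (f : V → ℕ) : Prop :=
  IsL21Labeling G f ∧ (∀ v, f v ≤ lambdaNum G) ∧ ∃ v, f v = lambdaNum G

/-- The set of holes of a labeling: unused labels `h` with `1 ≤ h ≤ λ(G) - 1`. -/
def labHoles (G : SimpleGraph V) (f : V → ℕ) : Set ℕ :=
  {h | 1 ≤ h ∧ h + 1 ≤ lambdaNum G ∧ ∀ v, f v ≠ h}

/-- The hole index `ρ(G)`: minimum number of holes over all λ-labelings. -/
noncomputable def holeIndex (G : SimpleGraph V) : ℕ :=
  sInf {k | ∃ f : V → ℕ, IsLambdaLabeling G f ∧ (labHoles G f).ncard = k}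

open scoped Classical in
/-- The island sequence of a labeling: the multiset of cardinalities of the maximal
intervals `[a,b]` of consecutive integers all used by the labeling. -/
noncomputable def islandSeq [Fintype V] (G : SimpleGraph V) (f : V → ℕ) : Multiset ℕ :=
  (((Finset.range (lambdaNum G + 1)) ×ˢ (Finset.range (lambdaNum G + 1))).filter
    (fun q => q.1 ≤ q.2 ∧ (∀ x ∈ Finset.Icc q.1 q.2, ∃ v, f v = x) ∧
      (q.1 = 0 ∨ ∀ v, f v ≠ q.1 - 1) ∧ ∀ v, f v ≠ q.2 + 1)).val.map
    fun q => q.2 - q.1 + 1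

/-- `G` admits (at least) two distinct island sequences. -/
def MultipleIslandSequences [Fintype V] (G : SimpleGraph V) : Prop :=
  ∃ f g : V → ℕ, IsLambdaLabeling G f ∧ IsLambdaLabeling G g ∧
    (labHoles G f).ncard = holeIndex G ∧ (labHoles G g).ncard = holeIndex G ∧
    islandSeq G f ≠ islandSeq G g

/-- A vine: a maximal path one of whose endpoints (`a`) is a leaf and all of whose
vertices are light.  Maximality: any light vertex adjacent to the other end already
lies on the path. -/
def IsVine (G : SimpleGraph V) {a b : V} (p : G.Walk a b) : Prop :=
  p.IsPath ∧ ndeg G a = 1 ∧ (∀ v ∈ p.support, ndeg G v ≤ 2) ∧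
  ∀ c, G.Adj b c → ndeg G c ≤ 2 → c ∈ p.support

/-- A vine with center `v`: the (heavy) vertex adjacent to the non-leaf end of the vine. -/
def IsVineWithCenter (G : SimpleGraph V) {a b : V} (p : G.Walk a b) (v : V) : Prop :=
  IsVine G p ∧ G.Adj b v ∧ 2 < ndeg G v

/-- The matching number of the subgraph of `G` induced by `S`. -/
noncomputable def matchingNumberOn (G : SimpleGraph V) (S : Set V) : ℕ :=
  sSup {k | ∃ M : Set (Sym2 V), M ⊆ G.edgeSet ∧ (∀ e ∈ M, ∀ v ∈ e, v ∈ S) ∧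
    (∀ e ∈ M, ∀ f ∈ M, e ≠ f → ∀ v, v ∈ e → v ∉ f) ∧ M.ncard = k}

/-- Labels used in the family `F`: `A`, or `B k` where `k` records the number of
vertices of each vine of the labeled generalized star that produced the label. -/
inductive Lab | A | B (k : ℕ)

/-- A labeled generalized star with center `c` whose vines have `k` vertices each
(equivalently, every leaf is at distance `k` from `c`); the degenerate case
`deg c = 2` is the convention regarding a path of length `2k` as a labeled
generalized star with two vines.  The neighbors of the center are labeled `B k`,
the other non-leaf vertices (and the center) are labeled `A`, leaves are unlabeled. -/
def IsLGenStar {W : Type*} (H : SimpleGraph W) (c : W) (k : ℕ)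
    (lab : W → Option Lab) : Prop :=
  H.IsTree ∧ 2 ≤ ndeg H c ∧ (∀ v, v ≠ c → ndeg H v ≤ 2) ∧
  (∀ v, ndeg H v = 1 → H.dist c v = k) ∧
  lab c = some Lab.A ∧
  (∀ v, H.Adj c v → lab v = some (Lab.B k)) ∧
  (∀ v, v ≠ c → ¬H.Adj c v → ndeg H v = 1 → lab v = none) ∧
  (∀ v, v ≠ c → ¬H.Adj c v → 2 ≤ ndeg H v → lab v = some Lab.A)

/-- A labeled path: a path with at least three vertices, non-leaf vertices labeled `A`. -/
def IsLPath {W : Type*} (H : SimpleGraph W) (lab : W → Option Lab) : Prop :=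
  H.IsTree ∧ (∀ v, ndeg H v ≤ 2) ∧ 3 ≤ Nat.card W ∧
  (∀ v, ndeg H v = 1 → lab v = none) ∧
  ∀ v, 2 ≤ ndeg H v → lab v = some Lab.A

/-- The induced subgraph of `T` on `s` is a labeled generalized star. -/
def LGenStarOn (T : SimpleGraph V) (s : Set V) (c : V) (k : ℕ)
    (lab : V → Option Lab) : Prop :=
  ∃ hc : c ∈ s, IsLGenStar (T.induce s) ⟨c, hc⟩ k fun v => lab v.1

/-- The induced subgraph of `T` on `s` is a labeled path. -/
def LPathOn (T : SimpleGraph V) (s : Set V) (lab : V → Option Lab) : Prop :=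
  IsLPath (T.induce s) fun v => lab v.1

/-- The family `F` of labeled trees, realized as induced subgraphs (on vertex sets `s`)
of an ambient graph `T`:  start from a labeled generalized star with at least three
vines or from a labeled path, and repeatedly attach, via a single new edge, a labeled
generalized star with at least three vines at a vertex labeled `A` (Type-1), a labeled
path by one of its non-leaf vertices at a vertex labeled `A` (Type-2), or a labeled
generalized star whose vines have the same number of vertices `k` as those of the star
that labeled `u` with `B k`, at a vertex `u` labeled `B k` (Type-3). -/
inductive InF (T : SimpleGraph V) : Set V → (V → Option Lab) → Prop
  | base_star (s : Set V) (c : V) (k : ℕ) (lab : V → Option Lab) :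
      LGenStarOn T s c k lab → 3 ≤ {w ∈ s | T.Adj c w}.ncard → InF T s lab
  | base_path (s : Set V) (lab : V → Option Lab) :
      LPathOn T s lab → InF T s lab
  | type1 (s : Set V) (lab : V → Option Lab) (t : Set V) (lab' : V → Option Lab)
      (u c : V) (k : ℕ) :
      InF T s lab → Disjoint s t → u ∈ s → c ∈ t → lab u = some Lab.A →
      LGenStarOn T t c k lab' → 3 ≤ {w ∈ t | T.Adj c w}.ncard →
      (∀ x ∈ s, ∀ y ∈ t, (T.Adj x y ↔ x = u ∧ y = c)) →
      (∀ x ∈ s, lab' x = lab x) →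
      InF T (s ∪ t) lab'
  | type2 (s : Set V) (lab : V → Option Lab) (t : Set V) (lab' : V → Option Lab)
      (u v : V) :
      InF T s lab → Disjoint s t → u ∈ s → v ∈ t → lab u = some Lab.A →
      LPathOn T t lab' → 2 ≤ {w ∈ t | T.Adj v w}.ncard →
      (∀ x ∈ s, ∀ y ∈ t, (T.Adj x y ↔ x = u ∧ y = v)) →
      (∀ x ∈ s, lab' x = lab x) →
      InF T (s ∪ t) lab'
  | type3 (s : Set V) (lab : V → Option Lab) (t : Set V) (lab' : V → Option Lab)
      (u c : V) (k : ℕ) :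
      InF T s lab → Disjoint s t → u ∈ s → c ∈ t → lab u = some (Lab.B k) →
      LGenStarOn T t c k lab' →
      (∀ x ∈ s, ∀ y ∈ t, (T.Adj x y ↔ x = u ∧ y = c)) →
      (∀ x ∈ s, lab' x = lab x) →
      InF T (s ∪ t) lab'

/-- `G` is obtained from the tree `T` by expanding each edge of `T` into a complete
graph of arbitrary order: there is an embedding `ι` of the vertices of `T` and an
assignment `b` of a block of vertices of `G` to each edge of `T` such that an original
vertex lies in the block of an edge iff it is an endpoint of that edge, blocks of
distinct edges meet only in original vertices, every vertex of `G` lies in some block,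
and two distinct vertices of `G` are adjacent iff they lie in a common block. -/
def IsBlockExpansion {U W : Type*} (T : SimpleGraph U) (G : SimpleGraph W) : Prop :=
  ∃ (ι : U ↪ W) (b : Sym2 U → Set W),
    (∀ (u : U), ∀ e ∈ T.edgeSet, (ι u ∈ b e ↔ u ∈ e)) ∧
    (∀ e ∈ T.edgeSet, ∀ f ∈ T.edgeSet, e ≠ f → b e ∩ b f ⊆ Set.range ι) ∧
    (∀ w : W, ∃ e ∈ T.edgeSet, w ∈ b e) ∧
    (∀ x y : W, G.Adj x y ↔ x ≠ y ∧ ∃ e ∈ T.edgeSet, x ∈ b e ∧ y ∈ b e)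

/-!
Write `degreeExcess T` for the sum of `deg v - 2` over the vertices `v` of degree greater than 2. In
a tree the degrees sum to `2 |V| - 2`, so the number of leaves is `degreeExcess T + 2` and it has to
be shown that `P(G) = degreeExcess T + 1`.

In a forest a path covering has as many paths as the forest has components plus the number of edges
it omits. Omitting `deg v - 2` edges at each vertex of degree greater than 2 is always enough; if
the forest is 2-sparse, no omitted edge can serve two such vertices, so it is also necessary. Hence
`P(T) = degreeExcess T + 1`.

A path covering of `G` induces one of `T` with no more paths: keep the edges of `T` whose two ends
are joined by the covering inside the corresponding block. Hence `P(T) ≤ P(G)`. Conversely, a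
Hamiltonian path between the two ends of each block turns `G` into a spanning tree, in which a
vertex of `T` has at most its degree in `T` and every other vertex has degree at most 2. The excess
of this tree is at most that of `T`, whence `P(G) ≤ degreeExcess T + 1`.
-/

section Degree

variable (G : SimpleGraph V)

lemma ndeg_eq_degree (v : V) [Fintype (G.neighborSet v)] : ndeg G v = G.degree v := by
  rw [ndeg, Set.ncard_eq_toFinset_card', ← card_neighborFinset_eq_degree, neighborFinset_def]

lemma ncard_edgeSet_eq_card_edgeFinset [Fintype G.edgeSet] :
    G.edgeSet.ncard = G.edgeFinset.card := by
  rw [Set.ncard_eq_toFinset_card', edgeFinset]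

lemma ncard_incidenceSet (v : V) : (G.incidenceSet v).ncard = ndeg G v := by
  classical
  exact Nat.card_congr (G.incidenceSetEquivNeighborSet v)

lemma sum_ndeg_eq_two_mul_ncard_edgeSet [Fintype V] :
    ∑ v, ndeg G v = 2 * G.edgeSet.ncard := by
  classical
  simp only [ndeg_eq_degree, ncard_edgeSet_eq_card_edgeFinset, sum_degrees_eq_twice_card_edges]

variable {G}

lemma sum_ndeg_le_ncard_edgeSet_of_isIndepSet [Finite V] {s : Finset V}
    (hs : G.IsIndepSet (s : Set V)) : ∑ v ∈ s, ndeg G v ≤ G.edgeSet.ncard := by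
  classical
  have := Fintype.ofFinite V
  simp only [ndeg_eq_degree, ← card_incidenceFinset_eq_degree, ncard_edgeSet_eq_card_edgeFinset]
  rw [← Finset.card_biUnion]
  · exact Finset.card_le_card (Finset.biUnion_subset.2 fun v _ ↦ G.incidenceFinset_subset v)
  · intro u hu v hv huv
    have h := G.incidenceSet_inter_incidenceSet_of_not_adj (hs hu hv huv) huv
    rwa [← Set.disjoint_iff_inter_eq_empty, ← coe_incidenceFinset, ← coe_incidenceFinset,
      Finset.disjoint_coe] at h

lemma ndeg_pos [Finite V] [Nontrivial V] (hG : G.Connected) (v : V) : 0 < ndeg G v := by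
  classical
  have := Fintype.ofFinite V
  rw [ndeg_eq_degree]
  exact hG.preconnected.degree_pos_of_nontrivial v

end Degree

section Forest

variable {G : SimpleGraph V}

lemma ncard_edgeSet_add_one_of_isTree [Finite V] (hG : G.IsTree) :
    G.edgeSet.ncard + 1 = Nat.card V :=
  (isTree_iff_connected_and_card.1 hG).2

/-- The number of edges to be removed at the vertices of degree greater than 2 in order to reach
maximum degree 2; the subtraction is truncated, so leaves and isolated vertices count for 0. -/
noncomputable def degreeExcess [Fintype V] (G : SimpleGraph V) : ℕ := ∑ v, (ndeg G v - 2)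

lemma degreeExcess_add_two_of_isTree [Fintype V] [Nontrivial V] (hG : G.IsTree) :
    degreeExcess G + 2 = numLeaves G := by
  classical
  have hleaves : numLeaves G = ∑ v, if ndeg G v = 1 then 1 else 0 := by
    rw [numLeaves, Set.ncard_eq_toFinset_card', ← Finset.card_filter, Set.toFinset_ofPred]
  have hsum : degreeExcess G + 2 * Fintype.card V = ∑ v, ndeg G v + numLeaves G := by
    rw [hleaves, degreeExcess, ← Finset.card_univ, mul_comm, ← smul_eq_mul, ← Finset.sum_const,
      ← Finset.sum_add_distrib, ← Finset.sum_add_distrib]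
    refine Finset.sum_congr rfl fun v _ ↦ ?_
    have := ndeg_pos hG.connected v
    split_ifs <;> omega
  have hedges := ncard_edgeSet_add_one_of_isTree hG
  rw [sum_ndeg_eq_two_mul_ncard_edgeSet] at hsum
  rw [Nat.card_eq_fintype_card] at hedges
  omega

lemma ndeg_toSimpleGraph (c : G.ConnectedComponent) (v : c) :
    ndeg c.toSimpleGraph v = ndeg G v := by
  rw [ndeg, ndeg, ← Set.ncard_image_of_injective _ Subtype.val_injective]
  congr 1
  ext w
  simp only [Set.mem_image, mem_neighborSet, Subtype.exists, exists_and_right, exists_eq_right]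
  exact ⟨fun ⟨_, h⟩ ↦ h, fun h ↦ ⟨c.mem_supp_of_adj_mem_supp v.2 h, h⟩⟩

lemma numPaths_eq_one (hG : G.Connected) : numPaths G = 1 := by
  have := hG.preconnected.subsingleton_connectedComponent
  have := hG.nonempty
  exact Nat.card_unique

lemma numPaths_add_ncard_edgeSet_of_isAcyclic [Finite V] (hG : G.IsAcyclic) :
    numPaths G + G.edgeSet.ncard = Nat.card V := by
  classical
  have := Fintype.ofFinite V
  have hcomp (c : G.ConnectedComponent) : ∑ v : c, ndeg G v + 2 = 2 * Nat.card c := by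
    simp only [← ndeg_toSimpleGraph, sum_ndeg_eq_two_mul_ncard_edgeSet,
      ← ncard_edgeSet_add_one_of_isTree (hG.isTree_connectedComponent c), mul_add, mul_one]
  have hfiber (f : V → ℕ) : ∑ c : G.ConnectedComponent, ∑ v : c, f v = ∑ v, f v :=
    Fintype.sum_fiberwise G.connectedComponentMk f
  have hcard : ∑ c : G.ConnectedComponent, Nat.card c = Nat.card V := by
    simpa only [Nat.card_eq_fintype_card, Fintype.card_eq_sum_ones] using hfiber fun _ ↦ 1
  have hsum := Fintype.sum_congr _ _ hcomp
  rw [Finset.sum_add_distrib, ← Finset.mul_sum, hfiber, hcard, sum_ndeg_eq_two_mul_ncard_edgeSet,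
    Finset.sum_const, Finset.card_univ, ← Nat.card_eq_fintype_card, smul_eq_mul] at hsum
  rw [numPaths]
  omega

end Forest
section PathCover

lemma isLinearForest_bot : IsLinearForest (⊥ : SimpleGraph V) :=
  ⟨isAcyclic_bot, fun v ↦ by simp [ndeg, neighborSet]⟩

lemma exists_isMinPathCover (G : SimpleGraph V) : ∃ H, IsMinPathCover G H :=
  Nat.sInf_mem (s := {k | ∃ H ≤ G, IsLinearForest H ∧ numPaths H = k})
    ⟨_, ⊥, bot_le, isLinearForest_bot, rfl⟩

variable {G G' H : SimpleGraph V}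

lemma pathCoverNumber_le_numPaths (hHG : H ≤ G) (hH : IsLinearForest H) :
    pathCoverNumber G ≤ numPaths H :=
  Nat.sInf_le ⟨H, hHG, hH, rfl⟩

lemma pathCoverNumber_anti (h : G ≤ G') : pathCoverNumber G' ≤ pathCoverNumber G := by
  obtain ⟨H, hHG, hH, hcard⟩ := exists_isMinPathCover G
  exact hcard ▸ pathCoverNumber_le_numPaths (hHG.trans h) hH

lemma ndeg_le_ndeg_add_ndeg_sdiff [Finite V] (G H : SimpleGraph V) (v : V) :
    ndeg G v ≤ ndeg H v + ndeg (G \ H) v :=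
  (Set.ncard_le_ncard fun w hw ↦ or_iff_not_imp_left.2 fun hHw ↦ ⟨hw, hHw⟩).trans
    (Set.ncard_union_le _ _)

lemma pathCoverNumber_le_numPaths_add_degreeExcess [Fintype V] (hG : G.IsAcyclic) :
    pathCoverNumber G ≤ numPaths G + degreeExcess G := by
  have hexcess (v : V) : ∃ S ⊆ G.incidenceSet v, S.ncard = ndeg G v - 2 :=
    Set.exists_subset_card_eq ((Nat.sub_le _ _).trans_eq (ncard_incidenceSet G v).symm)
  choose S hSG hScard using hexcess
  set H := G.deleteEdges (⋃ v, S v) with hH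
  have hHG : H ≤ G := G.deleteEdges_le _
  have hdeg (v : V) : ndeg H v ≤ 2 := by
    have hsub : H.incidenceSet v ⊆ G.incidenceSet v \ S v := fun e he ↦ by
      rw [incidenceSet, hH, edgeSet_deleteEdges] at he
      exact ⟨⟨he.1.1, he.2⟩, fun heS ↦ he.1.2 (Set.mem_iUnion_of_mem v heS)⟩
    have := Set.ncard_le_ncard hsub
    rw [Set.ncard_sdiff (hSG v), ncard_incidenceSet, ncard_incidenceSet, hScard] at this
    omega
  have hedges : G.edgeSet.ncard ≤ H.edgeSet.ncard + degreeExcess G := calc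
    G.edgeSet.ncard ≤ H.edgeSet.ncard + (⋃ v, S v).ncard := by
      rw [hH, edgeSet_deleteEdges]
      exact Set.ncard_le_ncard_sdiff_add_ncard _ _
    _ ≤ H.edgeSet.ncard + ∑ v, (S v).ncard := by
      gcongr
      exact Set.ncard_iUnion_le_of_fintype S
    _ = H.edgeSet.ncard + degreeExcess G := by simp only [hScard, degreeExcess]
  have hGcount := numPaths_add_ncard_edgeSet_of_isAcyclic hG
  have hHcount := numPaths_add_ncard_edgeSet_of_isAcyclic (hG.anti hHG)
  have hle := pathCoverNumber_le_numPaths hHG ⟨hG.anti hHG, hdeg⟩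
  omega

-- No edge joins two vertices of degree greater than 2, so no removed edge is counted twice.
lemma degreeExcess_le_ncard_edgeSet_sdiff [Fintype V] (hG : TwoSparse G)
    (hdeg : ∀ v, ndeg H v ≤ 2) :
    degreeExcess G ≤ (G \ H).edgeSet.ncard := by
  classical
  set heavy : Finset V := {v | 2 < ndeg G v}
  have hindep : (G \ H).IsIndepSet (heavy : Set V) := fun u hu v hv _ huv ↦ by
    have := hG u v huv.1
    simp only [heavy, Finset.coe_filter, Finset.mem_univ, true_and, Set.mem_ofPred_eq] at hu hv
    omega
  calc
    degreeExcess G = ∑ v ∈ heavy, (ndeg G v - 2) :=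
      (Finset.sum_filter_of_ne fun v _ hv ↦ by omega).symm
    _ ≤ ∑ v ∈ heavy, ndeg (G \ H) v := Finset.sum_le_sum fun v _ ↦ by
      have := ndeg_le_ndeg_add_ndeg_sdiff G H v
      have := hdeg v
      omega
    _ ≤ (G \ H).edgeSet.ncard := sum_ndeg_le_ncard_edgeSet_of_isIndepSet hindep

lemma numPaths_add_degreeExcess_le_pathCoverNumber [Fintype V] (hG : G.IsAcyclic)
    (hsp : TwoSparse G) : numPaths G + degreeExcess G ≤ pathCoverNumber G := by
  obtain ⟨H, hHG, hH, hcard⟩ := exists_isMinPathCover G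
  have hexcess := degreeExcess_le_ncard_edgeSet_sdiff hsp hH.2
  have hsdiff := Set.ncard_sdiff_add_ncard_of_subset (edgeSet_mono hHG)
  rw [← edgeSet_sdiff] at hsdiff
  have hGcount := numPaths_add_ncard_edgeSet_of_isAcyclic hG
  have hHcount := numPaths_add_ncard_edgeSet_of_isAcyclic hH.1
  omega

lemma numPaths_le_of_reachable {W : Type*} [Finite W] {K : SimpleGraph V} {H : SimpleGraph W}
    (f : V → W) (hf : ∀ u v, H.Reachable (f u) (f v) → K.Reachable u v) :
    numPaths K ≤ numPaths H := by
  refine Nat.card_le_card_of_injective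
    (fun C : K.ConnectedComponent ↦ H.connectedComponentMk (f C.out)) fun C D hCD ↦ ?_
  rw [← C.out_eq, ← D.out_eq]
  exact ConnectedComponent.sound (hf _ _ (ConnectedComponent.exact hCD))

end PathCover

section CliquePath

variable {G : SimpleGraph V}

lemma ncard_neighborSet_toSubgraph_le_two {u v : V} {p : G.Walk u v} (hp : p.IsPath)
    (hnil : ¬ p.Nil) (x : V) : (p.toSubgraph.neighborSet x).ncard ≤ 2 := by
  by_cases hx : x ∈ p.support
  · obtain ⟨i, rfl, hi⟩ := Walk.mem_support_iff_exists_getVert.1 hx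
    obtain rfl | hi₀ := eq_or_ne i 0
    · simp [hp.neighborSet_toSubgraph_startpoint hnil]
    · obtain rfl | hi₁ := hi.eq_or_lt
      · simp [hp.neighborSet_toSubgraph_endpoint hnil]
      · exact (hp.ncard_neighborSet_toSubgraph_internal_eq_two hi₀ hi₁).le
  · have : p.toSubgraph.neighborSet x = ∅ :=
      Set.eq_empty_of_forall_notMem fun _ h ↦ hx (p.mem_verts_toSubgraph.1 h.fst_mem)
    simp [this]

lemma exists_isPath_mem_support_iff_of_isClique {v : V} (t : Finset V) {u : V} (huv : u ≠ v)
    (hu : u ∉ t) (hv : v ∉ t) (hG : G.IsClique (insert u (insert v (t : Set V)))) :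
    ∃ p : G.Walk u v, p.IsPath ∧ ∀ x, x ∈ p.support ↔ x = u ∨ x = v ∨ x ∈ t := by
  classical
  induction t using Finset.induction_on generalizing u with
  | empty =>
    have hadj : G.Adj u v := hG (by simp) (by simp) huv
    exact ⟨hadj.toWalk, by simp [huv], by simp⟩
  | insert y t hyt ih =>
    rw [Finset.mem_insert, not_or] at hu hv
    have hadj : G.Adj u y := hG (by simp) (by simp) hu.1
    obtain ⟨p, hp, hsupp⟩ := ih (u := y) (Ne.symm hv.1) hyt hv.2 (hG.subset (by grind))
    refine ⟨.cons hadj p, hp.cons (by grind), fun x ↦ ?_⟩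
    rw [Walk.support_cons, List.mem_cons, hsupp, Finset.mem_insert]
    tauto

lemma exists_connected_subgraph_of_isClique {s : Set V} (hs : s.Finite) (hG : G.IsClique s)
    {u v : V} (huv : u ≠ v) (hu : u ∈ s) (hv : v ∈ s) :
    ∃ P : G.Subgraph, P.Connected ∧ P.verts = s ∧ (∀ x, (P.neighborSet x).ncard ≤ 2) ∧
      (P.neighborSet u).ncard ≤ 1 ∧ (P.neighborSet v).ncard ≤ 1 := by
  classical
  set t : Finset V := (hs.toFinset.erase u).erase v
  have ht : insert u (insert v (t : Set V)) = s := by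
    simp only [t, Finset.coe_erase, hs.coe_toFinset]
    grind
  obtain ⟨p, hp, hsupp⟩ := exists_isPath_mem_support_iff_of_isClique t huv (by simp [t])
    (by simp [t]) (ht ▸ hG)
  have hnil : ¬ p.Nil := Walk.not_nil_of_ne huv
  refine ⟨p.toSubgraph, p.toSubgraph_connected, ?_,
    ncard_neighborSet_toSubgraph_le_two hp hnil, ?_, ?_⟩
  · ext x
    rw [p.mem_verts_toSubgraph, hsupp, ← ht]
    rfl
  · simp [hp.neighborSet_toSubgraph_startpoint hnil]
  · simp [hp.neighborSet_toSubgraph_endpoint hnil]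

end CliquePath

section DegreeComparison

lemma sum_le_sum_of_embedding {U W M : Type*} [Fintype U] [Fintype W] [AddCommMonoid M]
    [Preorder M] [IsOrderedAddMonoid M] (ι : U ↪ W) {f : W → M} {g : U → M}
    (hι : ∀ u, f (ι u) ≤ g u) (hf : ∀ w ∉ Set.range ι, f w ≤ 0) : ∑ w, f w ≤ ∑ u, g u := calc
  ∑ w, f w ≤ ∑ w ∈ Finset.univ.map ι, f w :=
    Finset.sum_le_sum_of_subset_of_nonpos' (Finset.subset_univ _) fun w _ hw ↦
      hf w (by simpa using hw)
  _ = ∑ u, f (ι u) := Finset.sum_map _ _ _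
  _ ≤ ∑ u, g u := Finset.sum_le_sum fun u _ ↦ hι u

variable {U W : Type*} {T : SimpleGraph U} {K : SimpleGraph W} (ι : U ↪ W)
  (hι : ∀ u, ndeg K (ι u) ≤ ndeg T u) (hK : ∀ w ∉ Set.range ι, ndeg K w ≤ 2)

include hι hK

lemma degreeExcess_le_of_ndeg_le [Fintype U] [Fintype W] : degreeExcess K ≤ degreeExcess T :=
  sum_le_sum_of_embedding ι (fun u ↦ Nat.sub_le_sub_right (hι u) 2)
    fun w hw ↦ (Nat.sub_eq_zero_of_le (hK w hw)).le

-- A connected graph `K` is a tree as soon as the sum of `ndeg K w - 2` is at most `-2`.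
lemma isTree_of_ndeg_le [Finite U] [Finite W] (hT : T.IsTree) (hconn : K.Connected) :
    K.IsTree := by
  have := Fintype.ofFinite U
  have := Fintype.ofFinite W
  have hsum : ∑ w, ((ndeg K w : ℤ) - 2) ≤ ∑ u, ((ndeg T u : ℤ) - 2) :=
    sum_le_sum_of_embedding ι (fun u ↦ by simpa using hι u)
      fun w hw ↦ by have := hK w hw; omega
  simp only [Finset.sum_sub_distrib, ← Nat.cast_sum, sum_ndeg_eq_two_mul_ncard_edgeSet,
    Finset.sum_const, Finset.card_univ, nsmul_eq_mul, ← Nat.card_eq_fintype_card] at hsum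
  have hTcount := ncard_edgeSet_add_one_of_isTree hT
  have hKcount := hconn.card_vert_le_card_edgeSet_add_one
  refine isTree_iff_connected_and_card.2 ⟨hconn, ?_⟩
  rw [Nat.card_coe_set_eq] at hKcount ⊢
  omega

end DegreeComparison

lemma spanningCoe_induce_adj {G : SimpleGraph V} {s : Set V} {x y : V} :
    (G.induce s).spanningCoe.Adj x y ↔ G.Adj x y ∧ x ∈ s ∧ y ∈ s := by
  simp

/-- The data of a block expansion of `T` to `G`: the vertex of `G` standing for each vertex of `T`
and the set of vertices of the complete graph replacing each edge of `T`. The values of `block`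
outside `T.edgeSet` carry no information. -/
structure BlockExpansion {U W : Type*} (T : SimpleGraph U) (G : SimpleGraph W) where
  vertex : U ↪ W
  block : Sym2 U → Set W
  vertex_mem_block_iff : ∀ u, ∀ e ∈ T.edgeSet, (vertex u ∈ block e ↔ u ∈ e)
  block_inter_subset : ∀ e ∈ T.edgeSet, ∀ f ∈ T.edgeSet, e ≠ f →
    block e ∩ block f ⊆ Set.range vertex
  exists_mem_block : ∀ w, ∃ e ∈ T.edgeSet, w ∈ block e
  adj_iff : ∀ x y, G.Adj x y ↔ x ≠ y ∧ ∃ e ∈ T.edgeSet, x ∈ block e ∧ y ∈ block e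

lemma IsBlockExpansion.nonempty_blockExpansion {U W : Type*} {T : SimpleGraph U} {G : SimpleGraph W}
    (h : IsBlockExpansion T G) : Nonempty (BlockExpansion T G) :=
  let ⟨ι, b, h₁, h₂, h₃, h₄⟩ := h
  ⟨⟨ι, b, h₁, h₂, h₃, h₄⟩⟩

namespace BlockExpansion

variable {U W : Type*} {T : SimpleGraph U} {G : SimpleGraph W} (X : BlockExpansion T G)

lemma isClique_block {e : Sym2 U} (he : e ∈ T.edgeSet) : G.IsClique (X.block e) :=
  fun _ hx _ hy hxy ↦ (X.adj_iff _ _).2 ⟨hxy, e, he, hx, hy⟩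

lemma exists_vertex_eq_of_mem_block {e f : Sym2 U} (he : e ∈ T.edgeSet) (hf : f ∈ T.edgeSet)
    (hef : e ≠ f) {w : W} (hwe : w ∈ X.block e) (hwf : w ∈ X.block f) :
    ∃ x ∈ e, x ∈ f ∧ X.vertex x = w := by
  obtain ⟨x, rfl⟩ := X.block_inter_subset e he f hf hef ⟨hwe, hwf⟩
  exact ⟨x, (X.vertex_mem_block_iff x e he).1 hwe, (X.vertex_mem_block_iff x f hf).1 hwf, rfl⟩

lemma eq_vertex_of_mem_block {e f : Sym2 U} (he : e ∈ T.edgeSet) (hf : f ∈ T.edgeSet)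
    (hef : e ≠ f) {v : U} (hve : v ∈ e) (hvf : v ∈ f) {w : W} (hwe : w ∈ X.block e)
    (hwf : w ∈ X.block f) : w = X.vertex v := by
  obtain ⟨x, hxe, hxf, rfl⟩ := X.exists_vertex_eq_of_mem_block he hf hef hwe hwf
  by_contra hne
  exact hef (((Sym2.mem_and_mem_iff (ne_of_apply_ne X.vertex hne)).1 ⟨hxe, hve⟩).trans
    ((Sym2.mem_and_mem_iff (ne_of_apply_ne X.vertex hne)).1 ⟨hxf, hvf⟩).symm)

/-- The trace on `T` of a subgraph `H` of the expansion `G`: the edges of `T` whose two ends are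
joined by `H` inside the block of that edge. -/
def trace (H : SimpleGraph W) : SimpleGraph U where
  Adj u v := T.Adj u v ∧
    (H.induce (X.block s(u, v))).spanningCoe.Reachable (X.vertex u) (X.vertex v)
  symm := ⟨fun u _ h ↦ ⟨h.1.symm, Sym2.eq_swap (a := u) ▸ h.2.symm⟩⟩
  loopless := ⟨fun _ h ↦ h.1.ne rfl⟩

variable {X} {H : SimpleGraph W}

lemma trace_le : X.trace H ≤ T := fun _ _ h ↦ h.1

lemma trace_reachable_of_reachable_block {e : Sym2 U} (he : e ∈ T.edgeSet) {u v : U} (hu : u ∈ e)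
    (hv : v ∈ e) (h : (H.induce (X.block e)).spanningCoe.Reachable (X.vertex u) (X.vertex v)) :
    (X.trace H).Reachable u v := by
  obtain rfl | huv := eq_or_ne u v
  · rfl
  · obtain rfl := (Sym2.mem_and_mem_iff huv).1 ⟨hu, hv⟩
    exact Adj.reachable ⟨he, h⟩


-- Follow the walk, remembering the last vertex of `T` passed and the block entered from there.
lemma exists_trace_reachable_mem_block (hHG : H ≤ G) {u : U} {w : W}
    (hw : H.Reachable (X.vertex u) w) :
    ∃ v, ∃ e ∈ T.edgeSet, v ∈ e ∧ (X.trace H).Reachable u v ∧ w ∈ X.block e ∧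
      (H.induce (X.block e)).spanningCoe.Reachable (X.vertex v) w := by
  rw [reachable_iff_reflTransGen] at hw
  induction hw with
  | refl =>
    obtain ⟨e, he, hue⟩ := X.exists_mem_block (X.vertex u)
    exact ⟨u, e, he, (X.vertex_mem_block_iff u e he).1 hue, .rfl, hue, .rfl⟩
  | @tail x y _ hxy ih =>
    obtain ⟨v, e, he, hve, huv, hxe, hvx⟩ := ih
    obtain ⟨-, f, hf, hxf, hyf⟩ := (X.adj_iff x y).1 (hHG hxy)
    have hstep : (H.induce (X.block f)).spanningCoe.Reachable x y :=
      Adj.reachable (spanningCoe_induce_adj.2 ⟨hxy, hxf, hyf⟩)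
    obtain rfl | hef := eq_or_ne e f
    · exact ⟨v, e, he, hve, huv, hyf, hvx.trans hstep⟩
    · obtain ⟨z, hze, hzf, rfl⟩ := X.exists_vertex_eq_of_mem_block he hf hef hxe hxf
      exact ⟨z, f, hf, hzf, huv.trans (trace_reachable_of_reachable_block he hve hze hvx), hyf,
        hstep⟩

lemma trace_reachable_of_reachable (hHG : H ≤ G) {u v : U}
    (h : H.Reachable (X.vertex u) (X.vertex v)) : (X.trace H).Reachable u v := by
  obtain ⟨x, e, he, hxe, hux, hve, hxv⟩ := exists_trace_reachable_mem_block hHG h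
  exact hux.trans
    (trace_reachable_of_reachable_block he hxe ((X.vertex_mem_block_iff v e he).1 hve) hxv)

lemma exists_adj_mem_block_of_trace_adj {u v : U} (h : (X.trace H).Adj v u) :
    ∃ w ∈ X.block s(v, u), H.Adj (X.vertex v) w := by
  obtain ⟨p⟩ := h.2
  have hp : ¬ p.Nil := Walk.not_nil_of_ne (X.vertex.injective.ne h.1.ne)
  obtain ⟨hadj, -, hmem⟩ := spanningCoe_induce_adj.1 (p.adj_snd hp)
  exact ⟨p.snd, hmem, hadj⟩

lemma ndeg_trace_le [Finite W] (v : U) : ndeg (X.trace H) v ≤ ndeg H (X.vertex v) := by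
  have : Nonempty W := ⟨X.vertex v⟩
  choose! f hfblock hfadj using fun u (hu : (X.trace H).Adj v u) ↦
    exists_adj_mem_block_of_trace_adj hu
  refine Set.ncard_le_ncard_of_injOn f hfadj fun u hu u' hu' huu' ↦ ?_
  by_contra hne
  have hedges : s(v, u) ≠ s(v, u') := fun h ↦ hne (Sym2.congr_right.1 h)
  refine (hfadj u hu).ne' (X.eq_vertex_of_mem_block hu.1 hu'.1 hedges (Sym2.mem_mk_left v u)
    (Sym2.mem_mk_left v u') (hfblock u hu) ?_)
  exact huu' ▸ hfblock u' hu'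

lemma pathCoverNumber_le_of_isAcyclic [Finite W] (X : BlockExpansion T G) (hT : T.IsAcyclic) :
    pathCoverNumber T ≤ pathCoverNumber G := by
  obtain ⟨H, hHG, hH, hcard⟩ := exists_isMinPathCover G
  calc
    pathCoverNumber T ≤ numPaths (X.trace H) := pathCoverNumber_le_numPaths trace_le
      ⟨hT.anti trace_le, fun v ↦ (ndeg_trace_le v).trans (hH.2 _)⟩
    _ ≤ numPaths H := numPaths_le_of_reachable X.vertex fun _ _ ↦ trace_reachable_of_reachable hHG
    _ = pathCoverNumber G := hcard

variable {P : Sym2 U → G.Subgraph}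

/-- A choice of a Hamiltonian path `P e` in the block of each edge `e` of `T`, with the two ends of
`e` as its ends. Only the connectedness and the degrees of the paths are recorded. -/
structure IsPathSystem (X : BlockExpansion T G) (P : Sym2 U → G.Subgraph) : Prop where
  connected : ∀ e ∈ T.edgeSet, (P e).Connected
  verts_eq : ∀ e ∈ T.edgeSet, (P e).verts = X.block e
  ncard_neighborSet_le_two : ∀ e ∈ T.edgeSet, ∀ w, ((P e).neighborSet w).ncard ≤ 2
  ncard_neighborSet_vertex_le_one : ∀ e ∈ T.edgeSet, ∀ u ∈ e,
    ((P e).neighborSet (X.vertex u)).ncard ≤ 1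

lemma exists_isPathSystem [Finite W] (X : BlockExpansion T G) : ∃ P, X.IsPathSystem P := by
  have hpath : ∀ e ∈ T.edgeSet, ∃ P : G.Subgraph, P.Connected ∧ P.verts = X.block e ∧
      (∀ w, (P.neighborSet w).ncard ≤ 2) ∧ ∀ u ∈ e, (P.neighborSet (X.vertex u)).ncard ≤ 1 := by
    intro e he
    induction e using Sym2.ind with | _ u v =>
    obtain ⟨P, hconn, hverts, hdeg, hu, hv⟩ := exists_connected_subgraph_of_isClique
      (Set.toFinite _) (X.isClique_block he) (X.vertex.injective.ne (T.ne_of_adj he))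
      ((X.vertex_mem_block_iff u _ he).2 (Sym2.mem_mk_left u v))
      ((X.vertex_mem_block_iff v _ he).2 (Sym2.mem_mk_right u v))
    exact ⟨P, hconn, hverts, hdeg, Sym2.ball.2 ⟨hu, hv⟩⟩
  choose! P hP using hpath
  exact ⟨P, fun e he ↦ (hP e he).1, fun e he ↦ (hP e he).2.1, fun e he ↦ (hP e he).2.2.1,
    fun e he ↦ (hP e he).2.2.2⟩

/-- The spanning subgraph of `G` formed by the paths `P e` along the edges `e` of `T`. -/
def pathUnion (T : SimpleGraph U) (P : Sym2 U → G.Subgraph) : SimpleGraph W :=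
  ⨆ e ∈ T.edgeSet, (P e).spanningCoe

lemma pathUnion_adj {x y : W} : (pathUnion T P).Adj x y ↔ ∃ e ∈ T.edgeSet, (P e).Adj x y := by
  simp [pathUnion]

lemma pathUnion_le : pathUnion T P ≤ G :=
  iSup₂_le fun e _ ↦ (P e).spanningCoe_le

namespace IsPathSystem

variable (hP : X.IsPathSystem P)
include hP

lemma reachable_of_mem_block {e : Sym2 U} (he : e ∈ T.edgeSet) {x y : W} (hx : x ∈ X.block e)
    (hy : y ∈ X.block e) : (pathUnion T P).Reachable x y := by
  rw [← hP.verts_eq e he] at hx hy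
  let f : (P e).coe →g pathUnion T P := ⟨Subtype.val, fun h ↦ pathUnion_adj.2 ⟨e, he, h⟩⟩
  exact ((hP.connected e he).coe.preconnected ⟨x, hx⟩ ⟨y, hy⟩).map f

lemma connected_pathUnion (hT : T.Connected) : (pathUnion T P).Connected := by
  have hvertex (u v : U) : (pathUnion T P).Reachable (X.vertex u) (X.vertex v) := by
    have huv := hT.preconnected u v
    rw [reachable_iff_reflTransGen] at huv
    induction huv with
    | refl => rfl
    | @tail x y _ hxy ih => exact ih.trans (hP.reachable_of_mem_block hxy
        ((X.vertex_mem_block_iff x _ hxy).2 (Sym2.mem_mk_left x y))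
        ((X.vertex_mem_block_iff y _ hxy).2 (Sym2.mem_mk_right x y)))
  have hnear (w : W) : ∃ u, (pathUnion T P).Reachable (X.vertex u) w := by
    obtain ⟨e, he, hwe⟩ := X.exists_mem_block w
    induction e using Sym2.ind with | _ u v =>
    exact ⟨u, hP.reachable_of_mem_block he
      ((X.vertex_mem_block_iff u _ he).2 (Sym2.mem_mk_left u v)) hwe⟩
  have := hT.nonempty.map X.vertex
  refine ⟨fun x y ↦ ?_⟩
  obtain ⟨u, hux⟩ := hnear x
  obtain ⟨v, hvy⟩ := hnear y
  exact hux.symm.trans ((hvertex u v).trans hvy)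

lemma mem_block_of_adj {e : Sym2 U} (he : e ∈ T.edgeSet) {x y : W} (h : (P e).Adj x y) :
    x ∈ X.block e :=
  hP.verts_eq e he ▸ h.fst_mem

lemma ndeg_pathUnion_vertex_le [Finite U] [Finite W] (u : U) :
    ndeg (pathUnion T P) (X.vertex u) ≤ ndeg T u := by
  classical
  have hfin := (T.incidenceSet u).toFinite
  calc
    ndeg (pathUnion T P) (X.vertex u)
        ≤ (⋃ e ∈ hfin.toFinset, (P e).neighborSet (X.vertex u)).ncard := by
      refine Set.ncard_le_ncard fun w hw ↦ ?_
      obtain ⟨e, he, hadj⟩ := pathUnion_adj.1 hw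
      have hue := (X.vertex_mem_block_iff u e he).1 (hP.mem_block_of_adj he hadj)
      exact Set.mem_biUnion (hfin.mem_toFinset.2 ⟨he, hue⟩) hadj
    _ ≤ ∑ e ∈ hfin.toFinset, ((P e).neighborSet (X.vertex u)).ncard :=
      Finset.set_ncard_biUnion_le _ _
    _ ≤ hfin.toFinset.card • 1 := Finset.sum_le_card_nsmul _ _ _ fun e he ↦
      have he := hfin.mem_toFinset.1 he
      hP.ncard_neighborSet_vertex_le_one e he.1 u he.2
    _ = ndeg T u := by
      rw [smul_eq_mul, mul_one, ← Set.ncard_eq_toFinset_card _ hfin, ncard_incidenceSet]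

lemma ndeg_pathUnion_le_two [Finite W] {w : W} (hw : w ∉ Set.range X.vertex) :
    ndeg (pathUnion T P) w ≤ 2 := by
  obtain ⟨e, he, hwe⟩ := X.exists_mem_block w
  refine (Set.ncard_le_ncard fun y hy ↦ ?_).trans (hP.ncard_neighborSet_le_two e he w)
  obtain ⟨f, hf, hadj⟩ := pathUnion_adj.1 hy
  obtain rfl | hfe := eq_or_ne f e
  · exact hadj
  · exact absurd (X.block_inter_subset f hf e he hfe ⟨hP.mem_block_of_adj hf hadj, hwe⟩) hw

end IsPathSystem

lemma pathCoverNumber_le_one_add_degreeExcess [Fintype U] [Finite W] (X : BlockExpansion T G)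
    (hT : T.IsTree) : pathCoverNumber G ≤ 1 + degreeExcess T := by
  have := Fintype.ofFinite W
  obtain ⟨P, hP⟩ := X.exists_isPathSystem
  have hconn := hP.connected_pathUnion hT.connected
  have htree := isTree_of_ndeg_le X.vertex hP.ndeg_pathUnion_vertex_le
    (fun _ ↦ hP.ndeg_pathUnion_le_two) hT hconn
  calc
    pathCoverNumber G ≤ pathCoverNumber (pathUnion T P) := pathCoverNumber_anti pathUnion_le
    _ ≤ numPaths (pathUnion T P) + degreeExcess (pathUnion T P) :=
      pathCoverNumber_le_numPaths_add_degreeExcess htree.isAcyclic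
    _ ≤ 1 + degreeExcess T := by
      rw [numPaths_eq_one hconn]
      gcongr
      exact degreeExcess_le_of_ndeg_le X.vertex hP.ndeg_pathUnion_vertex_le
        fun _ ↦ hP.ndeg_pathUnion_le_two

end BlockExpansion

/-- **Theorem (Statement 7).** Let `T` be a 2-sparse tree with `ℓ ≥ 2` leaves and let
`G` be obtained from `T` by expanding each edge of `T` into a complete graph of
arbitrary order.  Then `P(G) = ℓ − 1`. -/
theorem blockExpansion_pathCoverNumber {U W : Type*} [Fintype U] [Fintype W]
    (T : SimpleGraph U) (G : SimpleGraph W)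
    (hT : T.IsTree) (hsp : TwoSparse T) (hl : 2 ≤ numLeaves T)
    (hexp : IsBlockExpansion T G) :
    (pathCoverNumber G : ℤ) = numLeaves T - 1 := by
  obtain ⟨u, -, v, -, huv⟩ := (Set.one_lt_ncard (Set.toFinite _)).1 hl
  have : Nontrivial U := ⟨u, v, huv⟩
  obtain ⟨X⟩ := hexp.nonempty_blockExpansion
  have hleaves := degreeExcess_add_two_of_isTree hT
  have hlower : 1 + degreeExcess T ≤ pathCoverNumber G := calc
    1 + degreeExcess T = numPaths T + degreeExcess T := by rw [numPaths_eq_one hT.connected]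
    _ ≤ pathCoverNumber T := numPaths_add_degreeExcess_le_pathCoverNumber hT.isAcyclic hsp
    _ ≤ pathCoverNumber G := X.pathCoverNumber_le_of_isAcyclic hT.isAcyclic
  have hupper := X.pathCoverNumber_le_one_add_degreeExcess hT
  omega

end PaperPC
end

section
/- Let T be a 2-sparse tree with ℓ ≥ 3 leaves, and let G be any graph obtained from T by expanding each edge of T into a complete graph of arbitrary order, with n the number of vertices of G. Then λ(G^c) = n + ℓ − 3 and ρ(G^c) = ℓ − 2, where G^c denotes the complement of G. -/
namespace PaperPC

open SimpleGraph

variable {V : Type*}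

/-!
In a labeling of `Gᶜ`, vertices with consecutive labels are adjacent in `G`.

Upper bound: root `T` at a leaf and split it into `ℓ - 1` descending paths, one ending at each other
leaf. The blocks along a path can be listed so that consecutive vertices are adjacent in `G`, so
labeling the paths one after the other leaves only the `ℓ - 2` holes between them.

Lower bound: two vertices with the same label dominate `G`, and then one of them is a given vertex
`p` of degree greater than 2. Hence a labeling is injective off `p`, and the pairs of consecutive
labels there form a linear forest avoiding `p`. Such a forest has few edges: it uses at most two
edges at every branch vertex and none at `p`, and in every block where it misses a branch vertex it
loses one edge; by 2-sparsity no block has two branch vertices, so the losses add up.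

The labeling of the upper bound is injective, so it uses the most labels and has the fewest holes.
-/

section Degree

variable {U : Type*} {T : SimpleGraph U}

lemma ndeg_eq_degree_s8 (T : SimpleGraph U) (v : U) [Fintype (T.neighborSet v)] :
    ndeg T v = T.degree v := by
  rw [ndeg, Set.ncard_eq_toFinset_card', ← card_neighborFinset_eq_degree]
  rfl

lemma ndeg_pos_s8 [Finite U] [Nontrivial U] (hT : T.Connected) (v : U) : 0 < ndeg T v := by
  have := Fintype.ofFinite (T.neighborSet v)
  rw [ndeg_eq_degree_s8]
  exact hT.preconnected.degree_pos_of_nontrivial v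

lemma exists_ndeg_eq_one [Finite U] [Nontrivial U] (hT : T.IsTree) : ∃ v, ndeg T v = 1 := by
  classical
  have := Fintype.ofFinite U
  obtain ⟨v, hv⟩ := hT.exists_vert_degree_one_of_nontrivial
  exact ⟨v, (ndeg_eq_degree_s8 T v).trans hv⟩

lemma nontrivial_of_two_lt_ndeg {v : U} (hv : 2 < ndeg T v) : Nontrivial U := by
  obtain ⟨w, hw⟩ := Set.nonempty_of_ncard_ne_zero (Nat.ne_zero_of_lt hv)
  exact ⟨v, w, T.ne_of_adj hw⟩

/-- The vertices of degree greater than 2. -/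
noncomputable def heavyVerts [Fintype U] (T : SimpleGraph U) : Finset U :=
  {v | 2 < ndeg T v}

lemma mem_heavyVerts [Fintype U] {v : U} : v ∈ heavyVerts T ↔ 2 < ndeg T v := by
  simp [heavyVerts]

lemma sum_ndeg_heavyVerts_add_two [Fintype U] [Nontrivial U] (hT : T.IsTree) :
    ∑ v ∈ heavyVerts T, ndeg T v + 2 = 2 * (heavyVerts T).card + numLeaves T := by
  classical
  have sum_ndeg : ∑ v, ndeg T v = 2 * T.edgeFinset.card := by
    simpa only [ndeg_eq_degree_s8] using T.sum_degrees_eq_twice_card_edges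
  have card_edges := hT.card_edgeFinset
  have card_leaves : numLeaves T = ({v | ndeg T v = 1} : Finset U).card := by
    rw [numLeaves, ← Set.ncard_coe_finset, Finset.coe_filter_univ]
  have by_degree : ∀ v, ndeg T v + (if ndeg T v = 1 then 1 else 0) +
      (if 2 < ndeg T v then 2 else 0) = 2 + (if 2 < ndeg T v then ndeg T v else 0) := by
    intro v
    have := ndeg_pos_s8 hT.connected v
    split_ifs <;> omega
  have summed := Fintype.sum_congr _ _ by_degree
  simp only [Finset.sum_add_distrib, ← Finset.sum_filter, Finset.sum_const, smul_eq_mul,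
    Finset.card_univ] at summed
  unfold heavyVerts
  omega

lemma exists_two_lt_ndeg [Finite U] (hT : T.IsTree) (hl : 3 ≤ numLeaves T) :
    ∃ v, 2 < ndeg T v := by
  have := Fintype.ofFinite U
  have : Nontrivial U := by
    obtain ⟨v, -, w, -, hvw⟩ := Set.one_lt_ncard_iff_nontrivial.mp
      (show 1 < {v | ndeg T v = 1}.ncard from lt_of_lt_of_le (by norm_num) hl)
    exact ⟨v, w, hvw⟩
  have hsum := sum_ndeg_heavyVerts_add_two hT
  by_contra! hlight
  have : heavyVerts T = ∅ := Finset.filter_eq_empty_iff.mpr fun v _ => (hlight v).not_gt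
  simp only [this, Finset.sum_empty, Finset.card_empty] at hsum
  omega

end Degree

section Rooting

variable {U : Type*} {T : SimpleGraph U}

/-- A root of a graph together with a choice, for every other vertex, of a neighbour one step
closer to the root; the value of `parent` at the root is irrelevant. -/
structure Rooting (T : SimpleGraph U) where
  root : U
  parent : U → U
  adj_parent : ∀ {x}, x ≠ root → T.Adj (parent x) x
  dist_parent : ∀ {x}, x ≠ root → T.dist root (parent x) + 1 = T.dist root x

lemma exists_rooting (hT : T.Connected) (r : U) : ∃ R : Rooting T, R.root = r := by
  have h : ∀ x, ∃ y, x ≠ r → T.Adj y x ∧ T.dist r y + 1 = T.dist r x := by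
    intro x
    obtain ⟨p, hp⟩ := hT.exists_walk_length_eq_dist x r
    cases p with
    | nil => exact ⟨r, fun hx => absurd rfl hx⟩
    | @cons _ y _ hxy q =>
      refine ⟨y, fun _ => ⟨hxy.symm, ?_⟩⟩
      have h_le := dist_le q
      have h_diff := hxy.symm.diff_dist_adj (u := r)
      rw [Walk.length_cons, T.dist_comm] at hp
      rw [T.dist_comm] at h_le
      omega
  choose par hpar using h
  exact ⟨⟨r, par, fun hx => (hpar _ hx).1, fun hx => (hpar _ hx).2⟩, rfl⟩

namespace Rooting

variable (R : Rooting T)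

/-- The distance of a vertex from the root. -/
noncomputable def depth (x : U) : ℕ := T.dist R.root x

variable {R} {x y : U}

lemma depth_parent (hx : x ≠ R.root) : R.depth (R.parent x) + 1 = R.depth x := R.dist_parent hx

lemma depth_root (R : Rooting T) : R.depth R.root = 0 := dist_self

/-- The edges joining a vertex to its parent already form a connected graph, and a tree is minimal
among the connected graphs on its vertices. -/
lemma eq_parent_or_eq_parent_of_adj (hT : T.IsTree) (R : Rooting T) (hxy : T.Adj x y) :
    (y ≠ R.root ∧ x = R.parent y) ∨ (x ≠ R.root ∧ y = R.parent x) := by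
  let H := SimpleGraph.fromRel fun x y => y ≠ R.root ∧ x = R.parent y
  have hHT : H ≤ T := by
    rintro x y ⟨-, ⟨hy, rfl⟩ | ⟨hx, rfl⟩⟩
    exacts [R.adj_parent hy, (R.adj_parent hx).symm]
  have reach : ∀ x, H.Reachable R.root x := by
    intro x
    induction h : R.depth x using Nat.strong_induction_on generalizing x with
    | _ n ih =>
      by_cases hx : x = R.root
      · exact hx ▸ Reachable.refl _
      · have hadj : H.Adj (R.parent x) x := ⟨(R.adj_parent hx).ne, Or.inl ⟨hx, rfl⟩⟩
        have := R.depth_parent hx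
        exact (ih _ (by omega) _ rfl).trans hadj.reachable
  have hH : H.Connected := connected_iff_exists_forall_reachable H |>.mpr ⟨R.root, reach⟩
  exact ((isTree_iff_minimal_connected.mp hT).le_of_le hH hHT hxy).2

lemma exists_edge_eq (hT : T.IsTree) (R : Rooting T) {e : Sym2 U} (he : e ∈ T.edgeSet) :
    ∃ c, c ≠ R.root ∧ e = s(R.parent c, c) := by
  induction e with | _ x y =>
  rcases R.eq_parent_or_eq_parent_of_adj hT he with ⟨hy, hxy⟩ | ⟨hx, hyx⟩
  · exact ⟨y, hy, congrArg (s(·, y)) hxy⟩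
  · exact ⟨x, hx, by rw [← hyx, Sym2.eq_swap]⟩

/-- The child by which the descending path through `x` continues, for `x` having a child. -/
noncomputable def preferredChild (R : Rooting T) (x : U) : U :=
  haveI : Nonempty U := ⟨x⟩
  Function.invFunOn R.parent {R.root}ᶜ x

/-- The vertices continuing the descending path that contains their parent. -/
def IsPreferred (R : Rooting T) (x : U) : Prop :=
  x ≠ R.root ∧ R.preferredChild (R.parent x) = x

open scoped Classical in
/-- The top vertex of the descending path containing `x`, when every vertex with children is
followed on its path by its preferred child. -/
noncomputable def pathTop (R : Rooting T) (x : U) : U :=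
  if R.IsPreferred x then R.pathTop (R.parent x) else x
termination_by R.depth x
decreasing_by rename_i h; exact (R.depth_parent h.1).le

lemma pathTop_of_isPreferred (hx : R.IsPreferred x) : R.pathTop x = R.pathTop (R.parent x) := by
  rw [pathTop, if_pos hx]

lemma pathTop_of_not_isPreferred (hx : ¬R.IsPreferred x) : R.pathTop x = x := by
  rw [pathTop, if_neg hx]

lemma not_isPreferred_pathTop (R : Rooting T) (x : U) : ¬R.IsPreferred (R.pathTop x) := by
  induction x using pathTop.induct R with
  | case1 x hx ih => rwa [pathTop_of_isPreferred hx]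
  | case2 x hx => rwa [pathTop_of_not_isPreferred hx]

lemma depth_pathTop_le (R : Rooting T) (x : U) : R.depth (R.pathTop x) ≤ R.depth x := by
  induction x using pathTop.induct R with
  | case1 x hx ih =>
    rw [pathTop_of_isPreferred hx]
    exact ih.trans (R.depth_parent hx.1 ▸ Nat.le_succ _)
  | case2 x hx => rw [pathTop_of_not_isPreferred hx]

lemma isPreferred_of_depth_pathTop_lt (h : R.depth (R.pathTop x) < R.depth x) :
    R.IsPreferred x := by
  by_contra hx
  exact h.ne (by rw [pathTop_of_not_isPreferred hx])

lemma eq_of_pathTop_eq_of_depth_eq (htop : R.pathTop x = R.pathTop y)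
    (hdepth : R.depth x = R.depth y) : x = y := by
  induction x using pathTop.induct R generalizing y with
  | case1 x hx ih =>
    have hx_parent := R.depth_parent hx.1
    have hy : R.IsPreferred y := by
      apply isPreferred_of_depth_pathTop_lt
      have := R.depth_pathTop_le (R.parent x)
      rw [← htop, pathTop_of_isPreferred hx]
      omega
    have hy_parent := R.depth_parent hy.1
    rw [pathTop_of_isPreferred hx, pathTop_of_isPreferred hy] at htop
    rw [← hx.2, ← hy.2, ih htop (by omega)]
  | case2 x hx =>
    have hy : ¬R.IsPreferred y := by
      intro hy
      have hy_parent := R.depth_parent hy.1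
      have := R.depth_pathTop_le (R.parent y)
      rw [← pathTop_of_isPreferred hy, ← htop, pathTop_of_not_isPreferred hx] at this
      omega
    rwa [pathTop_of_not_isPreferred hx, pathTop_of_not_isPreferred hy] at htop

lemma pathTop_parent_of_depth_lt (htop : R.pathTop x = R.pathTop y)
    (hdepth : R.depth x < R.depth y) : R.pathTop (R.parent y) = R.pathTop y :=
  (pathTop_of_isPreferred <| isPreferred_of_depth_pathTop_lt <|
    (htop ▸ R.depth_pathTop_le x).trans_lt hdepth).symm

lemma parent_preferredChild (hx : x ∈ R.parent '' {R.root}ᶜ) :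
    R.parent (R.preferredChild x) = x :=
  haveI : Nonempty U := ⟨x⟩
  Function.invFunOn_eq hx

lemma isPreferred_preferredChild (hx : x ∈ R.parent '' {R.root}ᶜ) :
    R.IsPreferred (R.preferredChild x) :=
  haveI : Nonempty U := ⟨x⟩
  ⟨Function.invFunOn_mem hx, by rw [parent_preferredChild hx]⟩

lemma ne_root_and_ndeg_eq_one_of_childless [Finite U] [Nontrivial U] (hT : T.IsTree)
    (hx : x ∉ R.parent '' {R.root}ᶜ) : x ≠ R.root ∧ ndeg T x = 1 := by
  have hadj : ∀ y, T.Adj x y → x ≠ R.root ∧ y = R.parent x := fun y hxy =>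
    (R.eq_parent_or_eq_parent_of_adj hT hxy).resolve_left fun h => hx ⟨y, h.1, h.2.symm⟩
  obtain ⟨y, hxy⟩ := (Set.ncard_pos (Set.toFinite _)).mp (ndeg_pos_s8 hT.connected x)
  have hroot := (hadj y hxy).1
  refine ⟨hroot, Set.ncard_eq_one.mpr ⟨R.parent x, ?_⟩⟩
  ext z
  exact ⟨fun hz => (hadj z hz).2, fun hz => hz ▸ (R.adj_parent hroot).symm⟩

lemma ncard_not_isPreferred_add_one_le [Finite U] [Nontrivial U] (hT : T.IsTree)
    (hroot : ndeg T R.root = 1) : {x | ¬R.IsPreferred x}.ncard + 1 ≤ numLeaves T := by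
  set I := R.parent '' {R.root}ᶜ
  have hI_le : I.ncard ≤ {x | R.IsPreferred x}.ncard := by
    refine Set.ncard_le_ncard_of_injOn R.preferredChild (fun x hx => isPreferred_preferredChild hx)
      (fun x hx y hy hxy => ?_) (Set.toFinite _)
    rw [← parent_preferredChild hx, hxy, parent_preferredChild hy]
  have h_compl := Set.ncard_add_ncard_compl {x | R.IsPreferred x}
  have hI_compl := Set.ncard_add_ncard_compl I
  have h_leaves : Iᶜ.ncard ≤ ({v | ndeg T v = 1} \ {R.root}).ncard :=
    Set.ncard_le_ncard (fun x hx => (ne_root_and_ndeg_eq_one_of_childless hT hx).symm)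
      (Set.toFinite _)
  have h_root := Set.ncard_sdiff_singleton_add_one (s := {v | ndeg T v = 1}) hroot (Set.toFinite _)
  change {x | R.IsPreferred x}ᶜ.ncard + 1 ≤ {v | ndeg T v = 1}.ncard
  omega

end Rooting

end Rooting

section ComplementLabeling

variable {W : Type*} {G : SimpleGraph W} {f : W → ℕ}

lemma isL21Labeling_compl_of_injective (hf : f.Injective)
    (h : ∀ u v, f v = f u + 1 → G.Adj u v) : IsL21Labeling Gᶜ f := by
  refine ⟨fun u v huv => ?_, fun u v huv => ?_⟩
  · obtain ⟨hne, hnadj⟩ := (compl_adj G u v).mp huv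
    have hf_ne := hf.ne hne
    have huv_succ : f v ≠ f u + 1 := fun hs => hnadj (h u v hs)
    have hvu_succ : f u ≠ f v + 1 := fun hs => hnadj (h v u hs).symm
    unfold Nat.dist
    omega
  · have hne : u ≠ v := by
      rintro rfl
      simp at huv
    exact Nat.dist_pos_of_ne (hf.ne hne)

lemma IsL21Labeling.adj_of_eq_add_one (hf : IsL21Labeling Gᶜ f) {u v : W}
    (h : f v = f u + 1) : G.Adj u v := by
  by_contra hnadj
  have hne : u ≠ v := by
    rintro rfl
    omega
  have := hf.1 u v ((compl_adj G u v).mpr ⟨hne, hnadj⟩)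
  unfold Nat.dist at this
  omega

lemma IsL21Labeling.dominating_of_eq (hf : IsL21Labeling Gᶜ f) {u v : W} (hne : u ≠ v)
    (h : f u = f v) : G.Adj u v ∧ ∀ w, w = u ∨ w = v ∨ G.Adj w u ∨ G.Adj w v := by
  have hadj : G.Adj u v := by
    by_contra hnadj
    have := hf.1 u v ((compl_adj G u v).mpr ⟨hne, hnadj⟩)
    simp [h, Nat.dist_self] at this
  refine ⟨hadj, fun w => ?_⟩
  by_contra! hw
  obtain ⟨hwu, hwv, hnu, hnv⟩ := hw
  have huw : Gᶜ.Adj u w := (compl_adj G u w).mpr ⟨hwu.symm, fun hc => hnu hc.symm⟩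
  have hwv : Gᶜ.Adj w v := (compl_adj G w v).mpr ⟨hwv, hnv⟩
  have hnuv : ¬Gᶜ.Adj u v := fun hc => ((compl_adj G u v).mp hc).2 hadj
  have hdist : Gᶜ.dist u v = 2 := by
    have h_le := dist_le (.cons huw (.cons hwv .nil))
    have h_ne_one : Gᶜ.dist u v ≠ 1 := fun hc => hnuv (dist_eq_one_iff_adj.mp hc)
    have h_pos := (huw.reachable.trans hwv.reachable).pos_dist_of_ne hne
    simp only [Walk.length_cons, Walk.length_nil] at h_le
    omega
  have := hf.2 u v hdist
  simp [h, Nat.dist_self] at this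

lemma exists_equiv_fin_monotone {α : Type*} [LinearOrder α] [Fintype W] (key : W → α) :
    ∃ e : W ≃ Fin (Fintype.card W), ∀ u v, e u ≤ e v → key u ≤ key v := by
  let e := Fintype.equivFin W
  let σ := Tuple.sort (key ∘ e.symm)
  refine ⟨e.trans σ.symm, fun u v huv => ?_⟩
  simpa [σ] using Tuple.monotone_sort (key ∘ e.symm) huv

/-- Label the classes of `idx` one after the other, each in order of `level`, leaving one hole
between consecutive classes. -/
lemma exists_injective_labeling_compl {ι α : Type*} [Finite ι] [LinearOrder α] [Fintype W]
    (idx : W → ι) (level : W → α)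
    (hadj : ∀ u v, u ≠ v → idx u = idx v → level u ≤ level v →
      (∀ w, idx w = idx u → ¬(level u < level w ∧ level w < level v)) → G.Adj u v) :
    ∃ f : W → ℕ, f.Injective ∧ IsL21Labeling Gᶜ f ∧
      ∀ v, f v + 2 ≤ Fintype.card W + Nat.card ι := by
  let i : W → Fin (Nat.card ι) := fun w => Finite.equivFin ι (idx w)
  obtain ⟨e, he⟩ := exists_equiv_fin_monotone fun w => toLex (i w, level w)
  have lt_of_key_lt : ∀ {u v}, toLex (i u, level u) < toLex (i v, level v) → e u < e v :=
    fun h => lt_of_not_ge fun hle => (he _ _ hle).not_gt h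
  have i_le : ∀ {u v}, e u ≤ e v → i u ≤ i v := fun h => Prod.Lex.monotone_fst _ _ (he _ _ h)
  let f : W → ℕ := fun w => e w + i w
  have f_lt : ∀ {u v}, e u < e v → f u < f v := fun h =>
    add_lt_add_of_lt_of_le h (i_le h.le)
  have f_inj : f.Injective := by
    intro u v huv
    rcases lt_trichotomy (e u) (e v) with h | h | h
    exacts [absurd huv (f_lt h).ne, e.injective h, absurd huv (f_lt h).ne']
  refine ⟨f, f_inj, isL21Labeling_compl_of_injective f_inj fun u v huv => ?_, fun v => ?_⟩
  · have hlt : e u < e v := by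
      by_contra! hle
      have : f v ≤ f u := add_le_add (Fin.le_def.mp hle) (Fin.le_def.mp (i_le hle))
      omega
    have hi_le := i_le hlt.le
    have hkey := he u v hlt.le
    obtain ⟨hsucc, hi⟩ : (e v : ℕ) = e u + 1 ∧ i u = i v := by
      simp only [f] at huv
      omega
    refine hadj u v (fun h => hlt.ne (h ▸ rfl)) ((Finite.equivFin ι).injective hi) ?_ ?_
    · simpa [Prod.Lex.toLex_le_toLex, hi] using hkey
    · rintro w hw ⟨huw, hwv⟩
      have hiw : i w = i u := congrArg (Finite.equivFin ι) hw
      have h₁ : e u < e w := lt_of_key_lt (Prod.Lex.toLex_lt_toLex.mpr (.inr ⟨hiw.symm, huw⟩))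
      have h₂ : e w < e v := lt_of_key_lt (Prod.Lex.toLex_lt_toLex.mpr (.inr ⟨hiw.trans hi, hwv⟩))
      omega
  · have := (e v).isLt
    have := (i v).isLt
    simp only [f]
    omega

end ComplementLabeling

section LinearForest

variable {W α : Type*} [LinearOrder α] {G : SimpleGraph W} {L : Finset (W × W)}

/-- A linear forest in `G`, each path of which is directed so that `f` increases along it, given by
its set of arcs. -/
structure IsAscendingLinearForest (G : SimpleGraph W) (f : W → α) (L : Finset (W × W)) :
    Prop where
  adj : ∀ a ∈ L, G.Adj a.1 a.2
  lt : ∀ a ∈ L, f a.1 < f a.2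
  injOn_fst : Set.InjOn Prod.fst (L : Set (W × W))
  injOn_snd : Set.InjOn Prod.snd (L : Set (W × W))

/-- The vertices incident with an arc of `L`. -/
def arcSupport [DecidableEq W] (L : Finset (W × W)) : Finset W :=
  L.image Prod.fst ∪ L.image Prod.snd

/-- The arcs of `L` incident with `w`. -/
def arcsAt [DecidableEq W] (L : Finset (W × W)) (w : W) : Finset (W × W) :=
  {a ∈ L | a.1 = w ∨ a.2 = w}

lemma mem_arcSupport [DecidableEq W] {w : W} : w ∈ arcSupport L ↔ ∃ a ∈ L, a.1 = w ∨ a.2 = w := by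
  simp only [arcSupport, Finset.mem_union, Finset.mem_image, ← exists_or, ← and_or_left]

namespace IsAscendingLinearForest

variable {f : W → α} (hL : IsAscendingLinearForest G f L)
include hL

lemma mono {L' : Finset (W × W)} (h : L' ⊆ L) : IsAscendingLinearForest G f L' where
  adj a ha := hL.adj a (h ha)
  lt a ha := hL.lt a (h ha)
  injOn_fst := hL.injOn_fst.mono h
  injOn_snd := hL.injOn_snd.mono h

lemma card_lt_card_arcSupport [DecidableEq W] (hne : L.Nonempty) :
    L.card < (arcSupport L).card := by
  obtain ⟨m, hm, hmax⟩ := L.exists_max_image (fun a => f a.2) hne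
  have hm_notMem : m.2 ∉ L.image Prod.fst := by
    intro h
    obtain ⟨a, ha, ham⟩ := Finset.mem_image.mp h
    exact (hmax a ha).not_gt (ham ▸ hL.lt a ha)
  rw [← Finset.card_image_of_injOn hL.injOn_fst]
  refine Finset.card_lt_card (Finset.ssubset_iff_of_subset Finset.subset_union_left |>.mpr
    ⟨m.2, ?_, hm_notMem⟩)
  exact mem_arcSupport.mpr ⟨m, hm, Or.inr rfl⟩

lemma card_arcsAt_le_two [DecidableEq W] (w : W) : (arcsAt L w).card ≤ 2 := by
  rw [arcsAt, Finset.filter_or]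
  refine (Finset.card_union_le _ _).trans (Nat.add_le_add (Finset.card_le_one.mpr ?_)
    (Finset.card_le_one.mpr ?_)) <;> intro a ha c hc <;> rw [Finset.mem_filter] at ha hc
  exacts [hL.injOn_fst ha.1 hc.1 (ha.2.trans hc.2.symm),
    hL.injOn_snd ha.1 hc.1 (ha.2.trans hc.2.symm)]

end IsAscendingLinearForest

/-- The pairs of vertices of `R` carrying consecutive labels. -/
def consecutivePairs (f : W → ℕ) (R : Finset W) : Finset (W × W) :=
  {a ∈ R ×ˢ R | f a.2 = f a.1 + 1}

variable {f : W → ℕ} {R : Finset W}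

lemma mem_consecutivePairs {a : W × W} :
    a ∈ consecutivePairs f R ↔ (a.1 ∈ R ∧ a.2 ∈ R) ∧ f a.2 = f a.1 + 1 := by
  rw [consecutivePairs, Finset.mem_filter, Finset.mem_product]

lemma IsL21Labeling.isAscendingLinearForest_consecutivePairs (hf : IsL21Labeling Gᶜ f)
    (hinj : Set.InjOn f R) : IsAscendingLinearForest G f (consecutivePairs f R) where
  adj a ha := hf.adj_of_eq_add_one (mem_consecutivePairs.mp ha).2
  lt a ha := (mem_consecutivePairs.mp ha).2 ▸ Nat.lt_succ_self _
  injOn_fst := by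
    intro a ha c hc h
    obtain ⟨⟨-, ha_mem⟩, ha_succ⟩ := mem_consecutivePairs.mp ha
    obtain ⟨⟨-, hc_mem⟩, hc_succ⟩ := mem_consecutivePairs.mp hc
    exact Prod.ext h (hinj ha_mem hc_mem (by rw [ha_succ, hc_succ, h]))
  injOn_snd := by
    intro a ha c hc h
    obtain ⟨⟨ha_mem, -⟩, ha_succ⟩ := mem_consecutivePairs.mp ha
    obtain ⟨⟨hc_mem, -⟩, hc_succ⟩ := mem_consecutivePairs.mp hc
    exact Prod.ext (hinj ha_mem hc_mem (by rw [h] at ha_succ; omega)) h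

/-- The labels of `R` and their successors, all below `k + 2`, have only the larger labels of
consecutive pairs in common. -/
lemma two_mul_card_le_add_card_consecutivePairs {k : ℕ} (hinj : Set.InjOn f R)
    (hk : ∀ v ∈ R, f v ≤ k) : 2 * R.card ≤ k + 2 + (consecutivePairs f R).card := by
  have h_labels : (R.image f).card = R.card := Finset.card_image_of_injOn hinj
  have h_succs : (R.image (f · + 1)).card = R.card :=
    Finset.card_image_of_injOn fun u hu v hv h => hinj hu hv (Nat.succ_injective h)
  have h_union : (R.image f ∪ R.image (f · + 1)).card ≤ k + 2 := by
    refine (Finset.card_le_card fun i hi => ?_).trans_eq (Finset.card_range (k + 2))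
    rw [Finset.mem_union, Finset.mem_image, Finset.mem_image] at hi
    rw [Finset.mem_range]
    rcases hi with ⟨v, hv, rfl⟩ | ⟨v, hv, rfl⟩ <;> have := hk v hv <;> omega
  have h_inter : (R.image f ∩ R.image (f · + 1)).card ≤ (consecutivePairs f R).card := by
    refine (Finset.card_le_card fun i hi => ?_).trans
      (Finset.card_image_le (f := fun a : W × W => f a.2))
    rw [Finset.mem_inter, Finset.mem_image, Finset.mem_image] at hi
    obtain ⟨⟨v, hv, rfl⟩, u, hu, huv⟩ := hi
    exact Finset.mem_image.mpr ⟨(u, v), mem_consecutivePairs.mpr ⟨⟨hu, hv⟩, huv.symm⟩, rfl⟩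
  have := Finset.card_union_add_card_inter (R.image f) (R.image (f · + 1))
  omega

end LinearForest

section Holes

variable {W : Type*} {H : SimpleGraph W} {f : W → ℕ}

lemma lambdaNum_le {k : ℕ} (hf : IsL21Labeling H f) (hk : ∀ v, f v ≤ k) : lambdaNum H ≤ k :=
  Nat.sInf_le ⟨f, hf, hk⟩

lemma exists_isL21Labeling_le_lambdaNum {k : ℕ} (hf : IsL21Labeling H f) (hk : ∀ v, f v ≤ k) :
    ∃ g, IsL21Labeling H g ∧ ∀ v, g v ≤ lambdaNum H :=
  Nat.sInf_mem (s := {k | ∃ g : W → ℕ, IsL21Labeling H g ∧ ∀ v, g v ≤ k}) ⟨k, f, hf, hk⟩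

lemma IsL21Labeling.sub_one (hf : IsL21Labeling H f) (hpos : ∀ v, f v ≠ 0) :
    IsL21Labeling H (f · - 1) := by
  have dist_sub_one : ∀ u v, Nat.dist (f u - 1) (f v - 1) = Nat.dist (f u) (f v) := by
    intro u v
    have hu := hpos u
    have hv := hpos v
    unfold Nat.dist
    omega
  exact ⟨fun u v h => (hf.1 u v h).trans_eq (dist_sub_one u v).symm,
    fun u v h => (hf.2 u v h).trans_eq (dist_sub_one u v).symm⟩

lemma exists_eq_zero_of_le_lambdaNum [Nonempty W] (hf : IsL21Labeling H f)
    (hle : ∀ v, f v ≤ lambdaNum H) : ∃ v, f v = 0 := by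
  by_contra! hpos
  have := lambdaNum_le (hf.sub_one hpos) fun v => Nat.sub_le_sub_right (hle v) 1
  obtain ⟨v⟩ := ‹Nonempty W›
  have := hpos v
  have := hle v
  omega

lemma isLambdaLabeling_of_le_lambdaNum [Nonempty W] (hf : IsL21Labeling H f)
    (hle : ∀ v, f v ≤ lambdaNum H) : IsLambdaLabeling H f := by
  refine ⟨hf, hle, ?_⟩
  by_contra! hne
  have hlt : ∀ v, f v < lambdaNum H := fun v => lt_of_le_of_ne (hle v) (hne v)
  have := lambdaNum_le hf fun v => Nat.le_sub_one_of_lt (hlt v)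
  obtain ⟨v⟩ := ‹Nonempty W›
  have := hlt v
  omega

/-- The labels `0` and `λ(H)` are used, so the holes are all the unused labels. -/
lemma IsLambdaLabeling.ncard_labHoles_add_card_image [Nonempty W] [Fintype W]
    (hf : IsLambdaLabeling H f) :
    (labHoles H f).ncard + (Finset.univ.image f).card = lambdaNum H + 1 := by
  obtain ⟨hL, hle, m, hm⟩ := hf
  obtain ⟨z, hz⟩ := exists_eq_zero_of_le_lambdaNum hL hle
  have h_holes : labHoles H f = ↑(Finset.range (lambdaNum H + 1) \ Finset.univ.image f) := by
    ext i
    simp only [labHoles, Set.mem_ofPred_eq, Finset.coe_sdiff, Set.mem_sdiff, Finset.mem_coe,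
      Finset.mem_range, Finset.mem_image, Finset.mem_univ, true_and, not_exists]
    refine ⟨fun h => ⟨by omega, h.2.2⟩, fun h => ⟨?_, ?_, h.2⟩⟩
    · exact Nat.one_le_iff_ne_zero.mpr fun hi => h.2 z (hz.trans hi.symm)
    · have := h.2 m
      omega
  rw [h_holes, Set.ncard_coe_finset, Finset.card_sdiff_add_card_eq_card, Finset.card_range]
  intro i hi
  obtain ⟨v, -, rfl⟩ := Finset.mem_image.mp hi
  exact Finset.mem_range.mpr (Nat.lt_succ_of_le (hle v))

lemma holeIndex_add_card_of_injective [Nonempty W] [Fintype W] (hinj : f.Injective)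
    (hf : IsL21Labeling H f) (hle : ∀ v, f v ≤ lambdaNum H) :
    holeIndex H + Fintype.card W = lambdaNum H + 1 := by
  have hf := isLambdaLabeling_of_le_lambdaNum hf hle
  have hf_holes := hf.ncard_labHoles_add_card_image
  rw [Finset.card_image_of_injective _ hinj, Finset.card_univ] at hf_holes
  have h_le : holeIndex H ≤ (labHoles H f).ncard := Nat.sInf_le ⟨f, hf, rfl⟩
  obtain ⟨g, hg, hg_holes⟩ : ∃ g, IsLambdaLabeling H g ∧ (labHoles H g).ncard = holeIndex H :=
    Nat.sInf_mem (s := {k | ∃ g : W → ℕ, IsLambdaLabeling H g ∧ (labHoles H g).ncard = k})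
      ⟨_, f, hf, rfl⟩
  have := hg.ncard_labHoles_add_card_image
  have : (Finset.univ.image g).card ≤ Fintype.card W := Finset.card_image_le
  omega

end Holes

/-- The data witnessing `IsBlockExpansion T G`: the embedding of the vertices of `T` into those of
`G`, and the vertex set of the complete graph replacing each edge of `T`. -/
structure BlockExpansion_s8 {U W : Type*} (T : SimpleGraph U) (G : SimpleGraph W) where
  emb : U ↪ W
  block : Sym2 U → Set W
  emb_mem_block_iff : ∀ u, ∀ e ∈ T.edgeSet, (emb u ∈ block e ↔ u ∈ e)
  inter_subset_range : ∀ e ∈ T.edgeSet, ∀ g ∈ T.edgeSet, e ≠ g → block e ∩ block g ⊆ Set.range emb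
  exists_mem_block : ∀ w, ∃ e ∈ T.edgeSet, w ∈ block e
  adj_iff : ∀ x y, G.Adj x y ↔ x ≠ y ∧ ∃ e ∈ T.edgeSet, x ∈ block e ∧ y ∈ block e

namespace BlockExpansion_s8

variable {U W : Type*} {T : SimpleGraph U} {G : SimpleGraph W}

section Basic

variable {B : BlockExpansion_s8 T G} {e g : Sym2 U} {x y : W}

lemma adj_of_mem (he : e ∈ T.edgeSet) (hxy : x ≠ y) (hx : x ∈ B.block e) (hy : y ∈ B.block e) :
    G.Adj x y :=
  (B.adj_iff x y).mpr ⟨hxy, e, he, hx, hy⟩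

lemma exists_emb_eq_of_mem_of_mem (he : e ∈ T.edgeSet) (hg : g ∈ T.edgeSet) (hne : e ≠ g)
    (hxe : x ∈ B.block e) (hxg : x ∈ B.block g) : ∃ a, B.emb a = x ∧ a ∈ e ∧ a ∈ g := by
  obtain ⟨a, rfl⟩ := B.inter_subset_range e he g hg hne ⟨hxe, hxg⟩
  exact ⟨a, rfl, (B.emb_mem_block_iff a e he).mp hxe, (B.emb_mem_block_iff a g hg).mp hxg⟩

lemma edge_eq_of_mem_of_mem (he : e ∈ T.edgeSet) (hg : g ∈ T.edgeSet) (hxy : x ≠ y)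
    (hxe : x ∈ B.block e) (hye : y ∈ B.block e) (hxg : x ∈ B.block g) (hyg : y ∈ B.block g) :
    e = g := by
  by_contra hne
  obtain ⟨a, rfl, hae, hag⟩ := exists_emb_eq_of_mem_of_mem he hg hne hxe hxg
  obtain ⟨c, rfl, hce, hcg⟩ := exists_emb_eq_of_mem_of_mem he hg hne hye hyg
  have hac : a ≠ c := fun h => hxy (congrArg B.emb h)
  exact hne (((Sym2.mem_and_mem_iff hac).mp ⟨hae, hce⟩).trans
    ((Sym2.mem_and_mem_iff hac).mp ⟨hag, hcg⟩).symm)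

end Basic

section UpperBound

/-- An assignment of each vertex of a block to the lower end of the corresponding edge of `T`,
except that the upper end is assigned to itself. -/
structure Ownership (B : BlockExpansion_s8 T G) (R : Rooting T) where
  own : W → U
  own_emb : ∀ x, own (B.emb x) = x
  eq_emb_root : ∀ {w}, own w = R.root → w = B.emb R.root
  mem_block : ∀ {w}, own w ≠ R.root → w ∈ B.block s(R.parent (own w), own w)

lemma nonempty_ownership (B : BlockExpansion_s8 T G) (hT : T.IsTree) (R : Rooting T) :
    Nonempty (B.Ownership R) := by
  have h : ∀ w, ∃ c, (∀ x, B.emb x = w → c = x) ∧ (c = R.root → w = B.emb R.root) ∧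
      (c ≠ R.root → w ∈ B.block s(R.parent c, c)) := by
    intro w
    by_cases hw : ∃ x, B.emb x = w
    · obtain ⟨x, rfl⟩ := hw
      exact ⟨x, fun y hy => (B.emb.injective hy).symm, fun h => h ▸ rfl, fun h =>
        (B.emb_mem_block_iff x _ (R.adj_parent h)).mpr (Sym2.mem_mk_right _ _)⟩
    · obtain ⟨e, he, hwe⟩ := B.exists_mem_block w
      obtain ⟨c, hc, rfl⟩ := R.exists_edge_eq hT he
      exact ⟨c, fun x hx => absurd ⟨x, hx⟩ hw, fun h => absurd h hc, fun _ => hwe⟩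
  choose own h_emb h_root h_block using h
  exact ⟨⟨own, fun x => h_emb _ _ rfl, h_root _, h_block _⟩⟩

namespace Ownership

variable {B : BlockExpansion_s8 T G} {R : Rooting T} (O : B.Ownership R) {u v : W}

lemma adj_of_own_eq (huv : u ≠ v) (h : O.own u = O.own v) : G.Adj u v := by
  have hv : O.own v ≠ R.root := fun hv =>
    huv ((O.eq_emb_root (h.trans hv)).trans (O.eq_emb_root hv).symm)
  exact adj_of_mem (R.adj_parent hv) huv (h ▸ O.mem_block (h ▸ hv)) (O.mem_block hv)

lemma adj_emb_parent (hv : O.own v ≠ R.root) : G.Adj (B.emb (R.parent (O.own v))) v := by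
  have hadj := R.adj_parent hv
  refine adj_of_mem hadj ?_ ?_ (O.mem_block hv)
  · exact fun h => hadj.ne (by rw [← O.own_emb (R.parent _), h])
  · exact (B.emb_mem_block_iff _ _ hadj).mpr (Sym2.mem_mk_left _ _)

open scoped Classical in
/-- The position of a vertex of `G` along a descending path: it increases downwards, every vertex
of `T` coming last among the vertices it owns. -/
noncomputable def level (w : W) : ℕ :=
  2 * R.depth (O.own w) + if w = B.emb (O.own w) then 1 else 0

lemma level_emb (x : U) : O.level (B.emb x) = 2 * R.depth x + 1 := by
  simp [level, O.own_emb]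

lemma depth_own_le (h : O.level u ≤ O.level v) : R.depth (O.own u) ≤ R.depth (O.own v) := by
  simp only [level] at h
  split_ifs at h <;> omega

lemma adj_of_consecutive (huv : u ≠ v) (htop : R.pathTop (O.own u) = R.pathTop (O.own v))
    (hlevel : O.level u ≤ O.level v)
    (hbetween : ∀ w, R.pathTop (O.own w) = R.pathTop (O.own u) →
      ¬(O.level u < O.level w ∧ O.level w < O.level v)) : G.Adj u v := by
  rcases (O.depth_own_le hlevel).eq_or_lt with hdepth | hdepth
  · exact O.adj_of_own_eq huv (R.eq_of_pathTop_eq_of_depth_eq htop hdepth)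
  have hv : O.own v ≠ R.root := fun hv => by simp [hv, R.depth_root] at hdepth
  have hdepth_parent := R.depth_parent hv
  have htop_parent := R.pathTop_parent_of_depth_lt htop hdepth
  suffices hu : u = B.emb (R.parent (O.own v)) from hu ▸ O.adj_emb_parent hv
  have hskip := hbetween (B.emb (R.parent (O.own v))) (by rw [O.own_emb, htop_parent, htop])
  have hlevel_v : O.level (B.emb (R.parent (O.own v))) < O.level v := by
    rw [O.level_emb, level]
    omega
  have hlevel_u : 2 * R.depth (R.parent (O.own v)) + 1 ≤ O.level u := by
    rw [← O.level_emb]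
    exact not_lt.mp fun h => hskip ⟨h, hlevel_v⟩
  unfold level at hlevel_u
  split_ifs at hlevel_u with hu
  · rw [hu, R.eq_of_pathTop_eq_of_depth_eq (htop.trans htop_parent.symm) (by omega)]
  · omega

end Ownership

/-- The classes of vertices are the `ℓ - 1` descending paths of `T` from a leaf, with their
blocks. -/
lemma exists_injective_labeling [Finite U] [Nontrivial U] [Fintype W] (B : BlockExpansion_s8 T G)
    (hT : T.IsTree) :
    ∃ f : W → ℕ, f.Injective ∧ IsL21Labeling Gᶜ f ∧
      ∀ v, f v + 3 ≤ Fintype.card W + numLeaves T := by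
  obtain ⟨r, hr⟩ := exists_ndeg_eq_one hT
  obtain ⟨R, rfl⟩ := exists_rooting hT.connected r
  obtain ⟨O⟩ := B.nonempty_ownership hT R
  let idx (w : W) : {x | ¬R.IsPreferred x} := ⟨R.pathTop (O.own w), R.not_isPreferred_pathTop _⟩
  have idx_eq_iff : ∀ u v, idx u = idx v ↔ R.pathTop (O.own u) = R.pathTop (O.own v) :=
    fun _ _ => Subtype.ext_iff
  obtain ⟨f, hf, hfL, hf_le⟩ := exists_injective_labeling_compl (G := G) idx O.level <| by
    simpa only [idx_eq_iff] using fun u v => O.adj_of_consecutive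
  have hpaths := R.ncard_not_isPreferred_add_one_le hT hr
  refine ⟨f, hf, hfL, fun v => ?_⟩
  have := hf_le v
  rw [Nat.card_coe_set_eq] at this
  omega

end UpperBound

section Domination

variable {B : BlockExpansion_s8 T G} {u v : W}

lemma exists_adj_of_dominating {e : Sym2 U} (he : e ∈ T.edgeSet) (hu : u ∈ B.block e)
    (hv : v ∈ B.block e) (hdom : ∀ w, w = u ∨ w = v ∨ G.Adj w u ∨ G.Adj w v) {z : U}
    (hz : z ∉ e) : ∃ a ∈ e, T.Adj a z ∧ (u = B.emb a ∨ v = B.emb a) := by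
  have of_adj : ∀ x ∈ B.block e, G.Adj (B.emb z) x → ∃ a ∈ e, T.Adj a z ∧ x = B.emb a := by
    intro x hx hadj
    obtain ⟨-, g, hg, hzg, hxg⟩ := (B.adj_iff _ _).mp hadj
    have hzg : z ∈ g := (B.emb_mem_block_iff z g hg).mp hzg
    obtain ⟨a, rfl, hae, hag⟩ :=
      exists_emb_eq_of_mem_of_mem he hg (fun h => hz (h ▸ hzg)) hx hxg
    have haz : a ≠ z := fun h => hz (h ▸ hae)
    rw [(Sym2.mem_and_mem_iff haz).mp ⟨hag, hzg⟩] at hg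
    exact ⟨a, hae, hg, rfl⟩
  rcases hdom (B.emb z) with rfl | rfl | h | h
  · exact absurd ((B.emb_mem_block_iff z e he).mp hu) hz
  · exact absurd ((B.emb_mem_block_iff z e he).mp hv) hz
  · obtain ⟨a, ha, haz, hau⟩ := of_adj u hu h
    exact ⟨a, ha, haz, Or.inl hau⟩
  · obtain ⟨a, ha, haz, hav⟩ := of_adj v hv h
    exact ⟨a, ha, haz, Or.inr hav⟩

/-- For `u`, `v` in the block of `e`, the edges of `T` which are `e` or join `e` to another vertex
at an end equal to `u` or `v` form a connected graph, hence are all the edges of `T`. -/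
lemma eq_or_eq_of_dominating (hT : T.IsTree) (hadj : G.Adj u v)
    (hdom : ∀ w, w = u ∨ w = v ∨ G.Adj w u ∨ G.Adj w v) {p : U} (hp : 2 < ndeg T p) :
    u = B.emb p ∨ v = B.emb p := by
  obtain ⟨-, e, he, hu, hv⟩ := (B.adj_iff _ _).mp hadj
  induction e with | _ x y =>
  let H := SimpleGraph.fromRel fun a z => T.Adj a z ∧
    (s(a, z) = s(x, y) ∨ a ∈ s(x, y) ∧ (u = B.emb a ∨ v = B.emb a))
  have hHT : H ≤ T := by
    rintro a z ⟨-, h | h⟩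
    exacts [h.1, h.1.symm]
  have hxy : H.Reachable x y := Adj.reachable ⟨he.ne, Or.inl ⟨he, Or.inl rfl⟩⟩
  have reach : ∀ z, H.Reachable x z := by
    intro z
    by_cases hz : z ∈ s(x, y)
    · rcases Sym2.mem_iff.mp hz with rfl | rfl
      exacts [Reachable.refl _, hxy]
    · obtain ⟨a, ha, haz, hauv⟩ := exists_adj_of_dominating he hu hv hdom hz
      have haz : H.Reachable a z := Adj.reachable ⟨haz.ne, Or.inl ⟨haz, Or.inr ⟨ha, hauv⟩⟩⟩
      rcases Sym2.mem_iff.mp ha with rfl | rfl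
      exacts [haz, hxy.trans haz]
  have hTH : T ≤ H := (isTree_iff_minimal_connected.mp hT).le_of_le
    ((connected_iff_exists_forall_reachable H).mpr ⟨x, reach⟩) hHT
  obtain ⟨q, hpq, hq⟩ := Set.exists_mem_notMem_of_ncard_lt_ncard
    (((Set.ncard_insert_le x {y}).trans_eq (by rw [Set.ncard_singleton])).trans_lt hp)
  have hq : q ∉ s(x, y) := fun h => hq (Sym2.mem_iff.mp h)
  rcases hTH hpq with ⟨-, ⟨-, h | h⟩ | ⟨-, h | h⟩⟩
  · exact absurd (h ▸ Sym2.mem_mk_right p q) hq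
  · exact h.2
  · exact absurd (h ▸ Sym2.mem_mk_left q p) hq
  · exact absurd h.1 hq

end Domination

section LowerBound

open scoped Classical

lemma two_le_ncard_block [Finite W] (B : BlockExpansion_s8 T G) {e : Sym2 U} (he : e ∈ T.edgeSet) :
    2 ≤ (B.block e).ncard := by
  induction e with | _ x y =>
  rw [← Set.ncard_pair (B.emb.injective.ne (T.ne_of_adj he))]
  refine Set.ncard_le_ncard (Set.pair_subset ?_ ?_) (Set.toFinite _)
  exacts [(B.emb_mem_block_iff x _ he).mpr (Sym2.mem_mk_left _ _),
    (B.emb_mem_block_iff y _ he).mpr (Sym2.mem_mk_right _ _)]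

lemma ncard_block_le [Finite W] (B : BlockExpansion_s8 T G) {e : Sym2 U} (he : e ∈ T.edgeSet) :
    (B.block e).ncard ≤ (B.block e \ Set.range B.emb).ncard + 2 := by
  induction e with | _ x y =>
  have h_old : B.block s(x, y) ∩ Set.range B.emb ⊆ {B.emb x, B.emb y} := by
    rintro _ ⟨hz, z, rfl⟩
    rcases Sym2.mem_iff.mp ((B.emb_mem_block_iff z _ he).mp hz) with rfl | rfl
    exacts [Set.mem_insert _ _, Set.mem_insert_of_mem _ rfl]
  have h_card := (Set.ncard_le_ncard h_old (Set.toFinite _)).trans (Set.ncard_insert_le _ _)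
  rw [Set.ncard_singleton] at h_card
  have := Set.ncard_inter_add_ncard_sdiff_eq_ncard (B.block s(x, y)) (Set.range B.emb)
    (Set.toFinite _)
  omega

lemma sum_ncard_block_sdiff_range_le [Fintype U] [Finite W] (B : BlockExpansion_s8 T G) :
    ∑ e ∈ T.edgeFinset, (B.block e \ Set.range B.emb).ncard ≤ (Set.range B.emb)ᶜ.ncard := by
  have := Fintype.ofFinite W
  simp only [Set.ncard_eq_toFinset_card']
  rw [← Finset.card_biUnion]
  · refine Finset.card_le_card (Finset.biUnion_subset.mpr fun e _ => ?_)
    exact Set.toFinset_subset_toFinset.mpr fun w hw => hw.2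
  · refine fun e he g hg hne => Finset.disjoint_left.mpr fun w hwe hwg => ?_
    rw [Set.mem_toFinset] at hwe hwg
    exact hwe.2 (B.inter_subset_range e (mem_edgeFinset.mp he) g (mem_edgeFinset.mp hg) hne
      ⟨hwe.1, hwg.1⟩)

lemma sum_ncard_block_add_one_le [Fintype U] [Fintype W] (B : BlockExpansion_s8 T G)
    (hT : T.IsTree) :
    ∑ e ∈ T.edgeFinset, (B.block e).ncard + 1 ≤ Fintype.card W + T.edgeFinset.card := by
  have h_blocks := Finset.sum_le_sum fun e he => B.ncard_block_le (mem_edgeFinset.mp he)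
  rw [Finset.sum_add_distrib, Finset.sum_const, smul_eq_mul] at h_blocks
  have h_new := B.sum_ncard_block_sdiff_range_le
  have h_compl := Set.ncard_add_ncard_compl (Set.range B.emb)
  rw [← Set.image_univ, Set.ncard_image_of_injective _ B.emb.injective, Set.ncard_univ,
    Nat.card_eq_fintype_card, Nat.card_eq_fintype_card, Set.image_univ] at h_compl
  have h_edges := hT.card_edgeFinset
  omega

/-- The arcs of `L` inside the block of `e`. -/
noncomputable def arcsIn (B : BlockExpansion_s8 T G) (L : Finset (W × W)) (e : Sym2 U) :
    Finset (W × W) :=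
  {a ∈ L | a.1 ∈ B.block e ∧ a.2 ∈ B.block e}

/-- The vertex `p` is an end of `e` that no arc of `L` inside the block of `e` meets. -/
def Misses (B : BlockExpansion_s8 T G) (L : Finset (W × W)) (p : U) (e : Sym2 U) : Prop :=
  p ∈ e ∧ B.emb p ∉ arcSupport (B.arcsIn L e)

variable {B : BlockExpansion_s8 T G} {L : Finset (W × W)}

lemma mem_arcsIn {e : Sym2 U} {a : W × W} :
    a ∈ B.arcsIn L e ↔ a ∈ L ∧ a.1 ∈ B.block e ∧ a.2 ∈ B.block e := by
  rw [arcsIn, Finset.mem_filter]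

lemma card_missing_heavyVerts_le_one [Fintype U] (hsp : TwoSparse T) {e : Sym2 U}
    (he : e ∈ T.edgeSet) : ({p ∈ heavyVerts T | B.Misses L p e} : Finset U).card ≤ 1 := by
  refine Finset.card_le_one.mpr fun p hp q hq => ?_
  by_contra hpq
  obtain ⟨hp, hpe, -⟩ := Finset.mem_filter.mp hp
  obtain ⟨hq, hqe, -⟩ := Finset.mem_filter.mp hq
  rw [(Sym2.mem_and_mem_iff hpq).mp ⟨hpe, hqe⟩] at he
  have := hsp p q he
  rw [mem_heavyVerts] at hp hq
  omega

variable {α : Type*} [LinearOrder α] {f : W → α} (hL : IsAscendingLinearForest G f L)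
include hL

lemma card_arcsIn_add_card_missing_lt [Fintype U] [Finite W] (hsp : TwoSparse T) {e : Sym2 U}
    (he : e ∈ T.edgeSet) :
    (B.arcsIn L e).card + ({p ∈ heavyVerts T | B.Misses L p e} : Finset U).card <
      (B.block e).ncard := by
  rcases (B.arcsIn L e).eq_empty_or_nonempty with h_empty | h_nonempty
  · have h_missing := card_missing_heavyVerts_le_one (B := B) (L := L) hsp he
    have := B.two_le_ncard_block he
    rw [h_empty, Finset.card_empty]
    omega
  set M : Finset U := {p ∈ heavyVerts T | B.Misses L p e}
  have h_arcs : (B.arcsIn L e).card < (arcSupport (B.arcsIn L e)).card :=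
    (hL.mono (Finset.filter_subset _ _)).card_lt_card_arcSupport h_nonempty
  have h_disjoint : Disjoint (arcSupport (B.arcsIn L e)) (M.map B.emb) := by
    refine Finset.disjoint_right.mpr fun w hw => ?_
    obtain ⟨p, hp, rfl⟩ := Finset.mem_map.mp hw
    exact (Finset.mem_filter.mp hp).2.2
  have h_subset : (↑(arcSupport (B.arcsIn L e) ∪ M.map B.emb) : Set W) ⊆ B.block e := by
    intro w hw
    rcases Finset.mem_union.mp hw with hw | hw
    · obtain ⟨a, ha, rfl | rfl⟩ := mem_arcSupport.mp hw
      exacts [(mem_arcsIn.mp ha).2.1, (mem_arcsIn.mp ha).2.2]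
    · obtain ⟨p, hp, rfl⟩ := Finset.mem_map.mp hw
      exact (B.emb_mem_block_iff p e he).mpr (Finset.mem_filter.mp hp).2.1
  have h_card := Set.ncard_le_ncard h_subset (Set.toFinite _)
  rw [Set.ncard_coe_finset, Finset.card_union_of_disjoint h_disjoint, Finset.card_map] at h_card
  omega

lemma ndeg_le_card_missed_add_card_arcsAt [Fintype U] (p : U) :
    ndeg T p ≤ ({e ∈ T.edgeFinset | B.Misses L p e} : Finset (Sym2 U)).card +
      (arcsAt L (B.emb p)).card := by
  have h_met : ({e ∈ T.incidenceFinset p | ¬B.Misses L p e} : Finset (Sym2 U)).card ≤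
      (arcsAt L (B.emb p)).card := by
    refine Finset.card_le_card_of_forall_subsingleton (fun e a => a ∈ B.arcsIn L e)
      (fun e he => ?_) (fun a _ e he g hg => ?_)
    · obtain ⟨he, hmet⟩ := Finset.mem_filter.mp he
      have hpe := (T.mem_incidenceFinset p e |>.mp he).2
      obtain ⟨a, ha, hap⟩ := mem_arcSupport.mp (not_not.mp fun h => hmet ⟨hpe, h⟩)
      exact ⟨a, Finset.mem_filter.mpr ⟨(mem_arcsIn.mp ha).1, hap⟩, ha⟩
    · obtain ⟨he, hae⟩ := he
      obtain ⟨hg, hag⟩ := hg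
      rw [Finset.mem_filter, mem_incidenceFinset] at he hg
      obtain ⟨haL, hae⟩ := mem_arcsIn.mp hae
      obtain ⟨-, hag⟩ := mem_arcsIn.mp hag
      exact edge_eq_of_mem_of_mem he.1.1 hg.1.1 (hL.adj a haL).ne hae.1 hae.2 hag.1 hag.2
  have h_missed : ({e ∈ T.incidenceFinset p | B.Misses L p e} : Finset (Sym2 U)).card ≤
      ({e ∈ T.edgeFinset | B.Misses L p e} : Finset (Sym2 U)).card :=
    Finset.card_le_card (Finset.filter_subset_filter _ (T.incidenceFinset_subset p))
  rw [ndeg_eq_degree_s8, ← T.card_incidenceFinset_eq_degree,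
    ← Finset.card_filter_add_card_filter_not (fun e => B.Misses L p e)]
  omega

lemma card_le_sum_card_arcsIn [Fintype U] :
    L.card ≤ ∑ e ∈ T.edgeFinset, (B.arcsIn L e).card := by
  refine (Finset.card_le_card fun a ha => ?_).trans Finset.card_biUnion_le
  obtain ⟨-, e, he, hae⟩ := (B.adj_iff _ _).mp (hL.adj a ha)
  exact Finset.mem_biUnion.mpr ⟨e, mem_edgeFinset.mpr he, mem_arcsIn.mpr ⟨ha, hae⟩⟩

lemma sum_card_arcsAt_heavyVerts_add_two_le [Fintype U] {p : U} (hp : 2 < ndeg T p)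
    (hLp : B.emb p ∉ arcSupport L) :
    ∑ q ∈ heavyVerts T, (arcsAt L (B.emb q)).card + 2 ≤ 2 * (heavyVerts T).card := by
  have hp := mem_heavyVerts.mpr hp
  have h_none : arcsAt L (B.emb p) = ∅ :=
    Finset.filter_eq_empty_iff.mpr fun a ha hap => hLp (mem_arcSupport.mpr ⟨a, ha, hap⟩)
  have h_others := Finset.sum_le_card_nsmul ((heavyVerts T).erase p)
    (fun q => (arcsAt L (B.emb q)).card) 2 fun q _ => hL.card_arcsAt_le_two _
  rw [← Finset.add_sum_erase _ _ hp, h_none, Finset.card_empty, ← Finset.card_erase_add_one hp]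
  rw [smul_eq_mul] at h_others
  omega

/-- Each block has at most as many arcs as it has vertices, minus one, minus one if its heavy end is
missed; and the edges at a heavy vertex `q` all miss `q`, but for at most two of them, and none if
`q = p`. -/
lemma card_add_numLeaves_add_one_le [Finite U] [Fintype W] [Nontrivial U]
    (B : BlockExpansion_s8 T G) (hT : T.IsTree) (hsp : TwoSparse T) {p : U} (hp : 2 < ndeg T p)
    (hLp : B.emb p ∉ arcSupport L) : L.card + numLeaves T + 1 ≤ Fintype.card W := by
  have := Fintype.ofFinite U
  have h_blocks : ∑ e ∈ T.edgeFinset, ((B.arcsIn L e).card +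
      ({q ∈ heavyVerts T | B.Misses L q e} : Finset U).card + 1) ≤
        ∑ e ∈ T.edgeFinset, (B.block e).ncard :=
    Finset.sum_le_sum fun e he => card_arcsIn_add_card_missing_lt hL hsp (mem_edgeFinset.mp he)
  have h_arcs := card_le_sum_card_arcsIn (B := B) hL
  have h_verts : ∑ q ∈ heavyVerts T, ndeg T q ≤
      ∑ q ∈ heavyVerts T, ({e ∈ T.edgeFinset | B.Misses L q e} : Finset (Sym2 U)).card +
        ∑ q ∈ heavyVerts T, (arcsAt L (B.emb q)).card := by
    rw [← Finset.sum_add_distrib]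
    exact Finset.sum_le_sum fun q _ => ndeg_le_card_missed_add_card_arcsAt hL q
  have h_arcsAt : ∑ q ∈ heavyVerts T, (arcsAt L (B.emb q)).card + 2 ≤
      2 * (heavyVerts T).card :=
    sum_card_arcsAt_heavyVerts_add_two_le hL hp hLp
  have h_missed : ∑ e ∈ T.edgeFinset, ({q ∈ heavyVerts T | B.Misses L q e} : Finset U).card =
      ∑ q ∈ heavyVerts T, ({e ∈ T.edgeFinset | B.Misses L q e} : Finset (Sym2 U)).card := by
    simp only [Finset.card_filter]
    exact Finset.sum_comm
  have h_sum := B.sum_ncard_block_add_one_le hT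
  have h_degrees := sum_ndeg_heavyVerts_add_two hT
  rw [Finset.sum_add_distrib, Finset.sum_add_distrib, Finset.sum_const, smul_eq_mul] at h_blocks
  omega

omit hL in
lemma le_of_isL21Labeling_compl [Finite U] [Fintype W] (B : BlockExpansion_s8 T G) (hT : T.IsTree)
    (hsp : TwoSparse T) {p : U} (hp : 2 < ndeg T p) {f : W → ℕ} (hf : IsL21Labeling Gᶜ f) {k : ℕ}
    (hk : ∀ v, f v ≤ k) : Fintype.card W + numLeaves T ≤ k + 3 := by
  have : Nontrivial U := nontrivial_of_two_lt_ndeg hp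
  let R : Finset W := Finset.univ.erase (B.emb p)
  have hinj : Set.InjOn f R := by
    intro u hu v hv huv
    by_contra hne
    obtain ⟨hadj, hdom⟩ := hf.dominating_of_eq hne huv
    rcases eq_or_eq_of_dominating hT hadj hdom hp with h | h
    exacts [Finset.ne_of_mem_erase hu h, Finset.ne_of_mem_erase hv h]
  have hL := hf.isAscendingLinearForest_consecutivePairs hinj
  have hLp : B.emb p ∉ arcSupport (consecutivePairs f R) := by
    intro h
    obtain ⟨a, ha, hap⟩ := mem_arcSupport.mp h
    obtain ⟨⟨h₁, h₂⟩, -⟩ := mem_consecutivePairs.mp ha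
    exact hap.elim (Finset.ne_of_mem_erase h₁) (Finset.ne_of_mem_erase h₂)
  have h_arcs := card_add_numLeaves_add_one_le hL B hT hsp hp hLp
  have h_labels := two_mul_card_le_add_card_consecutivePairs hinj fun v _ => hk v
  have h_card : R.card + 1 = Fintype.card W := Finset.card_erase_add_one (Finset.mem_univ _)
  omega

end LowerBound

lemma lambdaNum_compl_add_three [Finite U] [Fintype W] (B : BlockExpansion_s8 T G) (hT : T.IsTree)
    (hsp : TwoSparse T) (hl : 3 ≤ numLeaves T) :
    lambdaNum Gᶜ + 3 = Fintype.card W + numLeaves T := by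
  obtain ⟨p, hp⟩ := exists_two_lt_ndeg hT hl
  have : Nontrivial U := nontrivial_of_two_lt_ndeg hp
  obtain ⟨f, -, hf, hf_le⟩ := B.exists_injective_labeling hT
  have hf_le : ∀ v, f v ≤ Fintype.card W + numLeaves T - 3 :=
    fun v => Nat.le_sub_of_add_le (hf_le v)
  have h_upper : lambdaNum Gᶜ ≤ Fintype.card W + numLeaves T - 3 := lambdaNum_le hf hf_le
  obtain ⟨g, hg, hg_le⟩ := exists_isL21Labeling_le_lambdaNum hf hf_le
  have h_lower := B.le_of_isL21Labeling_compl hT hsp hp hg hg_le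
  omega

lemma holeIndex_compl_add_two [Finite U] [Finite W] (B : BlockExpansion_s8 T G) (hT : T.IsTree)
    (hsp : TwoSparse T) (hl : 3 ≤ numLeaves T) : holeIndex Gᶜ + 2 = numLeaves T := by
  obtain ⟨p, hp⟩ := exists_two_lt_ndeg hT hl
  have : Nontrivial U := nontrivial_of_two_lt_ndeg hp
  have : Nonempty W := ⟨B.emb p⟩
  have := Fintype.ofFinite W
  obtain ⟨f, hf_inj, hf, hf_le⟩ := B.exists_injective_labeling hT
  have h_lambda := B.lambdaNum_compl_add_three hT hsp hl
  have h_holes := holeIndex_add_card_of_injective hf_inj hf fun v => by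
    have := hf_le v
    omega
  omega

end BlockExpansion_s8

/-- **Corollary (Statement 8).** Let `T` be a 2-sparse tree with `ℓ ≥ 3` leaves and let
`G` (on `n` vertices) be obtained from `T` by expanding each edge of `T` into a
complete graph of arbitrary order.  Then `λ(Gᶜ) = n + ℓ − 3` and `ρ(Gᶜ) = ℓ − 2`. -/
theorem blockExpansion_complement_lambda_hole {U W : Type*} [Fintype U] [Fintype W]
    (T : SimpleGraph U) (G : SimpleGraph W)
    (hT : T.IsTree) (hsp : TwoSparse T) (hl : 3 ≤ numLeaves T)
    (hexp : IsBlockExpansion T G) :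
    (lambdaNum Gᶜ : ℤ) = Fintype.card W + numLeaves T - 3 ∧
    (holeIndex Gᶜ : ℤ) = numLeaves T - 2 := by
  obtain ⟨emb, block, h_mem, h_inter, h_cover, h_adj⟩ := hexp
  let B : BlockExpansion_s8 T G := ⟨emb, block, h_mem, h_inter, h_cover, h_adj⟩
  have h_lambda := B.lambdaNum_compl_add_three hT hsp hl
  have h_holes := B.holeIndex_compl_add_two hT hsp hl
  omega

end PaperPC
end
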